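/- arXiv:1201.1975 — 3 statements merged into one kernel-verified Lean document; each statement's English description precedes it below -/
import Mathlib

section
/- For every positive integer n, the iterated improper complex integral J_n = ∫_{-∞}^{∞} ds₁ e^{−is₁²} ∫_{-∞}^{s₁} ds₂ e^{is₂²} ∫_{-∞}^{s₂} ds₃ e^{−is₃²} ⋯ ∫_{-∞}^{s_{2n-1}} ds_{2n} e^{is_{2n}²} converges and equals (1/n!)·(π/2)ⁿ. -/
open Real MeasureTheory Filter Topology Complex

/-! Pair the variables and let `Y` be the sum of the gaps `s₁ - s₂, s₃ - s₄, …`. In terms of `Y`,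
the `2n`-fold integral over `a ≤ s₂ₙ ≤ ⋯ ≤ s₁ ≤ a + L` has an explicit density: it equals
`(1 / n!) ∫₀ᴸ exp (-i (2a + L) Y) (L - Y) Gₙ((L - Y) Y) dY`, where `Gₙ` is the `n`-fold convolution
power of `sinc` on the half-line. Both sides satisfy the same recursion in `n`, because
`A(z) = z Gₙ(z)` solves `A'' + A = n Gₙ₋₁`.

For `a = -T` and `L = 2T` the phase disappears, and centering `Y` leaves
`(1 / n!) 2T ∫₀ᵀ Gₙ(T² - x²) dx`. Here `T² - x²` sweeps `[0, T²]` with density `T / x ≈ 1` near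
`x = T`, so the limit is `(1 / n!) ∫₀^∞ Gₙ = (1 / n!) (∫₀^∞ sinc)ⁿ = (1 / n!) (π / 2)ⁿ`. -/

/-! ### Integration over a triangle -/

section Triangle

variable {E : Type*} [NormedAddCommGroup E] [NormedSpace ℝ E]

theorem integral_integral_triangle {f : ℝ → ℝ → E} (hf : Continuous (Function.uncurry f))
    {a b : ℝ} (hab : a ≤ b) :
    ∫ y in a..b, ∫ x in y..b, f x y = ∫ x in a..b, ∫ y in a..x, f x y := by
  let g : ℝ → ℝ → E := fun y x => (Set.Ioi y).indicator (fun x => f x y) x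
  have hg : IntegrableOn (Function.uncurry g) (Set.uIoc a b ×ˢ Set.uIoc a b) := by
    have hswap : IntegrableOn (fun p : ℝ × ℝ => f p.2 p.1) (Set.uIoc a b ×ˢ Set.uIoc a b) :=
      ((hf.comp continuous_swap).continuousOn.integrableOn_compact
        (isCompact_uIcc.prod isCompact_uIcc)).mono_set
        (Set.prod_mono Set.uIoc_subset_uIcc Set.uIoc_subset_uIcc)
    exact hswap.indicator (isOpen_lt continuous_fst continuous_snd).measurableSet
  calc ∫ y in a..b, ∫ x in y..b, f x y
      = ∫ y in a..b, ∫ x in a..b, g y x := by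
        refine intervalIntegral.integral_congr fun y hy => ?_
        rw [Set.uIcc_of_le hab] at hy
        simp only [g]
        rw [intervalIntegral.integral_of_le hy.2, intervalIntegral.integral_of_le hab,
          setIntegral_indicator measurableSet_Ioi, Set.Ioc_inter_Ioi, sup_of_le_right hy.1]
    _ = ∫ x in a..b, ∫ y in a..b, g y x := intervalIntegral_intervalIntegral_swap hg
    _ = ∫ x in a..b, ∫ y in a..x, f x y := by
        refine intervalIntegral.integral_congr fun x hx => ?_
        rw [Set.uIcc_of_le hab] at hx
        have hg_eq : (fun y => g y x) = (Set.Iio x).indicator (f x) := by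
          ext y; simp [g, Set.indicator]
        have hIoo : Set.Ioc a b ∩ Set.Iio x = Set.Ioo a x := by
          ext y
          exact ⟨fun h => ⟨h.1.1, h.2⟩, fun h => ⟨⟨h.1, h.2.le.trans hx.2⟩, h.2⟩⟩
        simp only [hg_eq]
        rw [intervalIntegral.integral_of_le hx.1, intervalIntegral.integral_of_le hab,
          setIntegral_indicator measurableSet_Iio, hIoo, integral_Ioc_eq_integral_Ioo]

theorem integral_eq_integral_diag_add_integral_deriv [CompleteSpace E] {f f' : ℝ → ℝ → E}
    (hf : Continuous (Function.uncurry f)) (hf' : Continuous (Function.uncurry f')) {a b : ℝ}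
    (hab : a ≤ b) (hderiv : ∀ y x, a < y → y < x → HasDerivAt (fun x => f x y) (f' x y) x) :
    ∫ y in a..b, f b y = ∫ x in a..b, (f x x + ∫ y in a..x, f' x y) := by
  have hdiag : Continuous fun x => f x x := hf.comp (continuous_id.prodMk continuous_id)
  have hinner : Continuous fun x => ∫ y in a..x, f' x y :=
    intervalIntegral.continuous_parametric_intervalIntegral_of_continuous hf' continuous_id
  have houter : Continuous fun y => ∫ x in y..b, f' x y := by
    simp only [intervalIntegral.integral_symm b]
    exact (intervalIntegral.continuous_parametric_intervalIntegral_of_continuous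
      (f := fun y x => f' x y) (hf'.comp continuous_swap) continuous_id).neg
  rw [intervalIntegral.integral_add (hdiag.intervalIntegrable _ _) (hinner.intervalIntegrable _ _),
    ← integral_integral_triangle hf' hab,
    ← intervalIntegral.integral_add (hdiag.intervalIntegrable _ _)
      (houter.intervalIntegrable _ _),
    intervalIntegral.integral_of_le hab, intervalIntegral.integral_of_le hab]
  refine setIntegral_congr_fun measurableSet_Ioc fun y hy => ?_
  have hftc : ∫ x in y..b, f' x y = f b y - f y y :=
    intervalIntegral.integral_eq_sub_of_hasDerivAt_of_le hy.2
      (hf.comp (continuous_id.prodMk continuous_const)).continuousOn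
      (fun x hx => hderiv y x hy.1 hx.1)
      ((hf'.comp (continuous_id.prodMk continuous_const)).intervalIntegrable _ _)
  simp only [hftc, add_sub_cancel]

end Triangle

/-! ### Convolution powers of `sinc` on the half-line -/

/-- The convolution of two functions on the half-line. Unlike `MeasureTheory.posConvolution` it is
not cut off at negative arguments, so that it stays differentiable at `0`. -/
noncomputable def causalConv (f g : ℝ → ℝ) (z : ℝ) : ℝ :=
  ∫ y in (0 : ℝ)..z, f (z - y) * g y

namespace causalConv

variable {f g h : ℝ → ℝ}

theorem continuous (hf : Continuous f) (hg : Continuous g) : Continuous (causalConv f g) :=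
  intervalIntegral.continuous_parametric_intervalIntegral_of_continuous
    (f := fun z y => f (z - y) * g y) (by fun_prop) continuous_id

theorem comm (f g : ℝ → ℝ) : causalConv f g = causalConv g f := by
  ext z
  have hreflect := intervalIntegral.integral_comp_sub_left (a := 0) (b := z)
    (fun y => g (z - y) * f y) z
  simp only [sub_sub_cancel, sub_self, sub_zero] at hreflect
  rw [causalConv, causalConv, ← hreflect]
  simp only [mul_comm]

theorem left_comm (hf : Continuous f) (hg : Continuous g) (hh : Continuous h) {z : ℝ}
    (hz : 0 ≤ z) : causalConv f (causalConv g h) z = causalConv g (causalConv f h) z := by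
  have eq_triangle {f g : ℝ → ℝ} (hf : Continuous f) (hg : Continuous g) :
      causalConv f (causalConv g h) z =
        ∫ w in (0 : ℝ)..z, ∫ y in w..z, f (z - y) * (g (y - w) * h w) := by
    rw [integral_integral_triangle (f := fun y w => f (z - y) * (g (y - w) * h w)) (by fun_prop) hz]
    simp only [causalConv, intervalIntegral.integral_const_mul]
  rw [eq_triangle hf hg, eq_triangle hg hf]
  congr 1 with w
  have hreflect := intervalIntegral.integral_comp_sub_left (a := w) (b := z)
    (fun y => g (z - y) * (f (y - w) * h w)) (z + w)
  simp only [add_sub_cancel_left, add_sub_cancel_right] at hreflect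
  rw [← hreflect]
  congr 1 with y
  rw [show z - (z + w - y) = y - w by ring, show z + w - y - w = z - y by ring]
  ring

theorem congr_right (f : ℝ → ℝ) {z : ℝ} (hz : 0 ≤ z) (hgh : ∀ y, 0 ≤ y → g y = h y) :
    causalConv f g z = causalConv f h z := by
  refine intervalIntegral.integral_congr fun y hy => ?_
  rw [Set.uIcc_of_le hz] at hy
  simp only [hgh y hy.1]

theorem const_mul_right (f g : ℝ → ℝ) (c z : ℝ) :
    causalConv f (fun y => c * g y) z = c * causalConv f g z := by
  simp only [causalConv, ← intervalIntegral.integral_const_mul, mul_left_comm]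

theorem sub_const_right (hf : Continuous f) (hg : Continuous g) (c z : ℝ) :
    causalConv f (fun y => g y - c) z = causalConv f g z - c * ∫ y in (0 : ℝ)..z, f y := by
  have hreflect : ∫ y in (0 : ℝ)..z, f (z - y) = ∫ y in (0 : ℝ)..z, f y := by
    simp only [intervalIntegral.integral_comp_sub_left f, sub_self, sub_zero]
  simp only [causalConv, mul_sub]
  rw [intervalIntegral.integral_sub (Continuous.intervalIntegrable (by fun_prop) _ _)
    (Continuous.intervalIntegrable (by fun_prop) _ _), intervalIntegral.integral_mul_const,
    hreflect, mul_comm c]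

theorem const_one_left (g : ℝ → ℝ) (z : ℝ) :
    causalConv (fun _ => 1) g z = ∫ y in (0 : ℝ)..z, g y := by
  simp only [causalConv, one_mul]

theorem integral_eq (hf : Continuous f) (hg : Continuous g) {z : ℝ} (hz : 0 ≤ z) :
    ∫ y in (0 : ℝ)..z, causalConv f g y = causalConv f (fun y => ∫ x in (0 : ℝ)..y, g x) z := by
  simpa only [const_one_left, funext (const_one_left g)] using
    left_comm continuous_const hf hg hz (f := fun _ => 1)

theorem mul_arg (hf : Continuous f) (hg : Continuous g) (z : ℝ) :
    z * causalConv f g z =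
      causalConv (fun y => y * f y) g z + causalConv f (fun y => y * g y) z := by
  simp only [causalConv]
  rw [← intervalIntegral.integral_const_mul, ← intervalIntegral.integral_add
    (Continuous.intervalIntegrable (by fun_prop) _ _)
    (Continuous.intervalIntegrable (by fun_prop) _ _)]
  congr 1 with y
  ring

theorem sin_left (hg : Continuous g) (z : ℝ) :
    causalConv Real.sin g z =
      Real.sin z * (∫ y in (0 : ℝ)..z, Real.cos y * g y) -
        Real.cos z * ∫ y in (0 : ℝ)..z, Real.sin y * g y := by
  rw [causalConv, ← intervalIntegral.integral_const_mul, ← intervalIntegral.integral_const_mul,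
    ← intervalIntegral.integral_sub (Continuous.intervalIntegrable (by fun_prop) _ _)
      (Continuous.intervalIntegrable (by fun_prop) _ _)]
  congr 1 with y
  rw [Real.sin_sub]
  ring

theorem cos_left (hg : Continuous g) (z : ℝ) :
    causalConv Real.cos g z =
      Real.cos z * (∫ y in (0 : ℝ)..z, Real.cos y * g y) +
        Real.sin z * ∫ y in (0 : ℝ)..z, Real.sin y * g y := by
  rw [causalConv, ← intervalIntegral.integral_const_mul, ← intervalIntegral.integral_const_mul,
    ← intervalIntegral.integral_add (Continuous.intervalIntegrable (by fun_prop) _ _)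
      (Continuous.intervalIntegrable (by fun_prop) _ _)]
  congr 1 with y
  rw [Real.cos_sub]
  ring

theorem hasDerivAt_sin_left (hg : Continuous g) (z : ℝ) :
    HasDerivAt (causalConv Real.sin g) (causalConv Real.cos g z) z := by
  have hcos := (Real.continuous_cos.mul hg).integral_hasStrictDerivAt 0 z |>.hasDerivAt
  have hsin := (Real.continuous_sin.mul hg).integral_hasStrictDerivAt 0 z |>.hasDerivAt
  rw [funext (sin_left hg), cos_left hg]
  refine (((Real.hasDerivAt_sin z).mul hcos).sub ((Real.hasDerivAt_cos z).mul hsin)).congr_deriv ?_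
  simp only [Pi.mul_apply]
  ring

theorem hasDerivAt_cos_left (hg : Continuous g) (z : ℝ) :
    HasDerivAt (causalConv Real.cos g) (g z - causalConv Real.sin g z) z := by
  have hcos := (Real.continuous_cos.mul hg).integral_hasStrictDerivAt 0 z |>.hasDerivAt
  have hsin := (Real.continuous_sin.mul hg).integral_hasStrictDerivAt 0 z |>.hasDerivAt
  rw [funext (cos_left hg), sin_left hg]
  refine (((Real.hasDerivAt_cos z).mul hcos).add ((Real.hasDerivAt_sin z).mul hsin)).congr_deriv ?_
  simp only [Pi.mul_apply]
  linear_combination g z * Real.sin_sq_add_cos_sq z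

end causalConv

theorem mul_sinc (z : ℝ) : z * Real.sinc z = Real.sin z := by
  rcases eq_or_ne z 0 with rfl | hz
  · simp
  · rw [Real.sinc_of_ne_zero hz, mul_div_cancel₀ _ hz]

/-- The convolution powers of `sinc` on the half-line; the index is shifted, `sincConvPow k` being
the convolution of `k + 1` factors. -/
noncomputable def sincConvPow : ℕ → ℝ → ℝ
  | 0 => Real.sinc
  | k + 1 => causalConv Real.sinc (sincConvPow k)

theorem continuous_sincConvPow : ∀ k, Continuous (sincConvPow k)
  | 0 => Real.continuous_sinc
  | k + 1 => causalConv.continuous Real.continuous_sinc (continuous_sincConvPow k)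

theorem mul_sincConvPow_succ (k : ℕ) {z : ℝ} (hz : 0 ≤ z) :
    z * sincConvPow (k + 1) z = (k + 2) * causalConv Real.sin (sincConvPow k) z := by
  induction k generalizing z with
  | zero =>
    simp only [sincConvPow, causalConv.mul_arg Real.continuous_sinc Real.continuous_sinc, mul_sinc,
      causalConv.comm Real.sinc Real.sin]
    push_cast
    ring
  | succ k ih =>
    have hcomm : causalConv Real.sinc (causalConv Real.sin (sincConvPow k)) z =
        causalConv Real.sin (sincConvPow (k + 1)) z :=
      causalConv.left_comm Real.continuous_sinc Real.continuous_sin (continuous_sincConvPow k) hz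
    rw [sincConvPow, causalConv.mul_arg Real.continuous_sinc (continuous_sincConvPow _),
      causalConv.congr_right _ hz fun y hy => ih hy, causalConv.const_mul_right, hcomm]
    simp only [mul_sinc]
    push_cast
    ring

/-! ### The iterated integral in gap variables -/

/-- The factor that the variable of index `i`, counted from `0`, contributes to the oscillatory
integrand. -/
noncomputable def alternatingPhase (i : ℕ) (s : ℝ) : ℂ :=
  cexp (-I * ((-1) ^ i * (s : ℂ) ^ 2))

theorem continuous_alternatingPhase (i : ℕ) : Continuous (alternatingPhase i) := by
  unfold alternatingPhase
  fun_prop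

theorem alternatingPhase_add_two (i : ℕ) : alternatingPhase (i + 2) = alternatingPhase i := by
  ext s
  simp [alternatingPhase, pow_succ]

theorem alternatingPhase_zero_mul_one (s : ℝ) :
    alternatingPhase 0 s * alternatingPhase 1 s = 1 := by
  simp [alternatingPhase, ← Complex.exp_add]

/-- The phase left in the integral over `a ≤ s₂ ≤ s₁ ≤ a + L` with gap `s₁ - s₂ = Y`, once `s₁` has
been integrated out; with more variables, `Y` is the sum of the gaps `s₁ - s₂, s₃ - s₄, …`. -/
noncomputable def gapPhase (a L Y : ℝ) : ℂ :=
  cexp (-I * ((2 * a + L) * Y : ℝ))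

@[fun_prop]
theorem continuous_gapPhase (a : ℝ) : Continuous fun p : ℝ × ℝ => gapPhase a p.1 p.2 := by
  unfold gapPhase
  fun_prop

theorem hasDerivAt_gapPhase_left (a L Y : ℝ) :
    HasDerivAt (fun L => gapPhase a L Y) (gapPhase a L Y * (-I * Y)) L := by
  have harg : HasDerivAt (fun L => (2 * a + L) * Y) Y L := by
    simpa using ((hasDerivAt_id L).const_add (2 * a)).mul_const Y
  exact (harg.ofReal_comp.const_mul (-I)).cexp

theorem hasDerivAt_gapPhase_right (a L Y : ℝ) :
    HasDerivAt (gapPhase a L) (gapPhase a L Y * (-I * (2 * a + L))) Y := by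
  have harg : HasDerivAt (fun Y => (2 * a + L) * Y) (2 * a + L) Y := by
    simpa using (hasDerivAt_id Y).const_mul (2 * a + L)
  exact (harg.ofReal_comp.const_mul (-I)).cexp.congr_deriv (by simp [gapPhase])

theorem hasDerivAt_alternatingPhase_one_add (a s : ℝ) :
    HasDerivAt (fun s => alternatingPhase 1 (a + s))
      (alternatingPhase 1 (a + s) * (2 * I * (a + s))) s := by
  have hsq : HasDerivAt (fun s => (a + s) ^ 2) (2 * (a + s)) s :=
    (((hasDerivAt_id s).const_add a).pow 2).congr_deriv (by simp)
  refine ((hsq.ofReal_comp.const_mul I).cexp.congr_deriv ?_).congr_of_eventuallyEq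
    (.of_forall fun s => ?_)
  · simp only [alternatingPhase, pow_one, ofReal_mul, ofReal_pow, ofReal_add, ofReal_ofNat]
    ring_nf
  · simp [alternatingPhase]

/-- The oscillatory integral over total gaps `Y` with amplitude `(L - Y) G((L - Y) Y)`. -/
noncomputable def gapIntegral (a : ℝ) (G : ℝ → ℝ) (L : ℝ) : ℂ :=
  ∫ Y in (0 : ℝ)..L, gapPhase a L Y * ((L - Y) * G ((L - Y) * Y) : ℝ)

theorem gapIntegral_eq_integral_integral (a : ℝ) {G A A' : ℝ → ℝ} (hG : Continuous G)
    (hA : ∀ z, HasDerivAt A (A' z) z) (hA' : Continuous A') (hGA : ∀ z, 0 ≤ z → z * G z = A z)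
    {L : ℝ} (hL : 0 ≤ L) :
    gapIntegral a G L = ∫ s in (0 : ℝ)..L, ∫ Y in (0 : ℝ)..s,
      gapPhase a s Y * (A' ((s - Y) * Y) - I * A ((s - Y) * Y)) := by
  have hA_cont : Continuous A := continuous_iff_continuousAt.2 fun z => (hA z).continuousAt
  have hamplitude (Y s : ℝ) (hY : 0 < Y) (hs : Y < s) :
      HasDerivAt (fun s => (s - Y) * G ((s - Y) * Y)) (A' ((s - Y) * Y)) s := by
    have harg : HasDerivAt (fun s => (s - Y) * Y) Y s := by
      simpa using ((hasDerivAt_id s).sub_const Y).mul_const Y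
    have hdiv : HasDerivAt (fun s => A ((s - Y) * Y) / Y) (A' ((s - Y) * Y)) s :=
      (((hA _).comp s harg).div_const Y).congr_deriv (mul_div_cancel_right₀ _ hY.ne')
    refine hdiv.congr_of_eventuallyEq ?_
    filter_upwards [lt_mem_nhds hs] with t ht
    rw [← hGA _ (mul_nonneg (sub_nonneg.2 ht.le) hY.le)]
    field_simp
  have hleibniz := integral_eq_integral_diag_add_integral_deriv
    (f := fun s Y => gapPhase a s Y * ((s - Y) * G ((s - Y) * Y) : ℝ))
    (f' := fun s Y => gapPhase a s Y * (A' ((s - Y) * Y) - I * A ((s - Y) * Y)))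
    (by fun_prop) (by fun_prop) hL fun Y s hY hs => by
      refine ((hasDerivAt_gapPhase_left a s Y).mul
        (hamplitude Y s hY hs).ofReal_comp).congr_deriv ?_
      rw [← hGA _ (mul_nonneg (sub_nonneg.2 hs.le) hY.le)]
      push_cast
      ring
  simpa [gapIntegral] using hleibniz

section Transport

variable {F : ℝ → ℝ} {B : ℝ → ℂ}

-- The two integrands differ by the derivative of `Y ↦ -(gapPhase a s Y * B ((s - Y) * Y))`, which
-- produces the boundary term.
theorem integral_deriv_gapPhase_mul (a : ℝ) (hF : Continuous F)
    (hB : ∀ z, HasDerivAt B (F z - I * B z) z) (s : ℝ) :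
    B 0 * gapPhase a s s + ∫ Y in (0 : ℝ)..s,
        gapPhase a s Y * (2 * I * (a + s - Y) * B ((s - Y) * Y) + Y * F ((s - Y) * Y)) =
      B 0 + gapIntegral a F s := by
  have hB_cont : Continuous B := continuous_iff_continuousAt.2 fun z => (hB z).continuousAt
  let D (Y : ℝ) : ℂ :=
    gapPhase a s Y * (2 * I * (a + s - Y) * B ((s - Y) * Y) + Y * F ((s - Y) * Y))
  let K (Y : ℝ) : ℂ := gapPhase a s Y * ((s - Y) * F ((s - Y) * Y) : ℝ)
  have hD : Continuous D := by fun_prop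
  have hK : Continuous K := by fun_prop
  have htotal (Y : ℝ) :
      HasDerivAt (fun Y => -(gapPhase a s Y * B ((s - Y) * Y))) (D Y - K Y) Y := by
    have harg : HasDerivAt (fun Y => (s - Y) * Y) (s - 2 * Y) Y :=
      (((hasDerivAt_id Y).const_sub s).mul (hasDerivAt_id Y)).congr_deriv (by simp; ring)
    have hBarg := HasDerivAt.scomp (h := fun Y => (s - Y) * Y) Y (hB ((s - Y) * Y)) harg
    refine ((hasDerivAt_gapPhase_right a s Y).mul hBarg).neg.congr_deriv ?_
    simp only [D, K, Function.comp, Complex.real_smul]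
    push_cast
    ring
  have hftc := intervalIntegral.integral_eq_sub_of_hasDerivAt (a := 0) (b := s)
    (fun Y _ => htotal Y) ((hD.sub hK).intervalIntegrable _ _)
  rw [intervalIntegral.integral_sub (hD.intervalIntegrable _ _) (hK.intervalIntegrable _ _),
    sub_eq_iff_eq_add] at hftc
  have hphase_zero : gapPhase a s 0 = 1 := by simp [gapPhase]
  simp only [D, K] at hftc
  simp only [hftc, gapIntegral, sub_self, zero_mul, mul_zero, hphase_zero]
  ring

theorem alternatingPhase_one_mul_integral (a : ℝ) (hF : Continuous F)
    (hB : ∀ z, HasDerivAt B (F z - I * B z) z) {L : ℝ} (hL : 0 ≤ L) :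
    alternatingPhase 1 (a + L) * ∫ Y in (0 : ℝ)..L, gapPhase a L Y * B ((L - Y) * Y) =
      ∫ s in (0 : ℝ)..L, alternatingPhase 1 (a + s) * (B 0 + gapIntegral a F s) := by
  have hB_cont : Continuous B := continuous_iff_continuousAt.2 fun z => (hB z).continuousAt
  have hphase : Continuous fun s => alternatingPhase 1 s := continuous_alternatingPhase 1
  have hleibniz := integral_eq_integral_diag_add_integral_deriv
    (f := fun s Y => alternatingPhase 1 (a + s) * (gapPhase a s Y * B ((s - Y) * Y)))
    (f' := fun s Y => alternatingPhase 1 (a + s) *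
      (gapPhase a s Y * (2 * I * (a + s - Y) * B ((s - Y) * Y) + Y * F ((s - Y) * Y))))
    (by fun_prop) (by fun_prop) hL fun Y s _ _ => by
      have harg : HasDerivAt (fun s => (s - Y) * Y) Y s := by
        simpa using ((hasDerivAt_id s).sub_const Y).mul_const Y
      refine ((hasDerivAt_alternatingPhase_one_add a s).mul
        ((hasDerivAt_gapPhase_left a s Y).mul
          (HasDerivAt.scomp (h := fun s => (s - Y) * Y) s (hB _) harg))).congr_deriv ?_
      simp only [Pi.mul_apply, Function.comp, Complex.real_smul]
      ring
  rw [← intervalIntegral.integral_const_mul, hleibniz]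
  simp only [intervalIntegral.integral_const_mul, sub_self, zero_mul, ← mul_add,
    mul_comm _ (B 0), integral_deriv_gapPhase_mul a hF hB]

end Transport

theorem gapIntegral_eq_iterated (a : ℝ) {G A A' F : ℝ → ℝ} (hG : Continuous G) (hF : Continuous F)
    (hA : ∀ z, HasDerivAt A (A' z) z) (hA' : ∀ z, HasDerivAt A' (F z - A z) z)
    (hGA : ∀ z, 0 ≤ z → z * G z = A z) {L : ℝ} (hL : 0 ≤ L) :
    gapIntegral a G L = ∫ s in (0 : ℝ)..L, alternatingPhase 0 (a + s) *
      ∫ r in (0 : ℝ)..s, alternatingPhase 1 (a + r) * (A' 0 + gapIntegral a F r) := by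
  have hA'_cont : Continuous A' := continuous_iff_continuousAt.2 fun z => (hA' z).continuousAt
  have hA_zero : A 0 = 0 := by rw [← hGA 0 le_rfl, zero_mul]
  -- This `B` turns the equation `A'' + A = F` into `B' = F - i B`, so that `gapPhase` absorbs it.
  let B (z : ℝ) : ℂ := A' z - I * A z
  have hB (z : ℝ) : HasDerivAt B (F z - I * B z) z := by
    refine ((hA' z).ofReal_comp.sub ((hA z).ofReal_comp.const_mul I)).congr_deriv ?_
    simp only [B]
    push_cast
    linear_combination -(A z : ℂ) * I_sq
  rw [gapIntegral_eq_integral_integral a hG hA hA'_cont hGA hL]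
  refine intervalIntegral.integral_congr fun s hs => ?_
  rw [Set.uIcc_of_le hL] at hs
  have htransport := alternatingPhase_one_mul_integral a hF hB hs.1
  simp only [B, hA_zero, ofReal_zero, mul_zero, sub_zero] at htransport
  simp only [← htransport, ← mul_assoc, alternatingPhase_zero_mul_one, one_mul]

theorem gapIntegral_const_mul (a c : ℝ) (G : ℝ → ℝ) (L : ℝ) :
    gapIntegral a (fun z => c * G z) L = c * gapIntegral a G L := by
  simp only [gapIntegral, ← intervalIntegral.integral_const_mul]
  congr 1 with Y
  push_cast
  ring

theorem gapIntegral_sinc (a : ℝ) {L : ℝ} (hL : 0 ≤ L) :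
    gapIntegral a Real.sinc L = ∫ s in (0 : ℝ)..L, alternatingPhase 0 (a + s) *
      ∫ r in (0 : ℝ)..s, alternatingPhase 1 (a + r) := by
  rw [gapIntegral_eq_iterated a (F := fun _ => 0) Real.continuous_sinc continuous_const
    Real.hasDerivAt_sin (fun z => by simpa using Real.hasDerivAt_cos z) (fun z _ => mul_sinc z) hL]
  simp [gapIntegral]

theorem gapIntegral_sincConvPow_succ (a : ℝ) (k : ℕ) {L : ℝ} (hL : 0 ≤ L) :
    gapIntegral a (sincConvPow (k + 1)) L =
      (k + 2) * ∫ s in (0 : ℝ)..L, alternatingPhase 0 (a + s) *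
        ∫ r in (0 : ℝ)..s, alternatingPhase 1 (a + r) * gapIntegral a (sincConvPow k) r := by
  have hG := continuous_sincConvPow k
  rw [gapIntegral_eq_iterated a (F := fun z => (k + 2) * sincConvPow k z)
    (continuous_sincConvPow (k + 1)) (by fun_prop)
    (fun z => (causalConv.hasDerivAt_sin_left hG z).const_mul (k + 2 : ℝ))
    (fun z => ((causalConv.hasDerivAt_cos_left hG z).const_mul (k + 2 : ℝ)).congr_deriv
      (mul_sub _ _ _))
    (fun z hz => mul_sincConvPow_succ k hz) hL]
  have hcos_zero : causalConv Real.cos (sincConvPow k) 0 = 0 := by simp [causalConv]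
  simp only [hcos_zero, gapIntegral_const_mul, mul_zero, ofReal_zero, zero_add,
    mul_left_comm (alternatingPhase _ _) (_ : ℂ), intervalIntegral.integral_const_mul]
  push_cast
  rfl

/-- The integral of `∏ φ i (s i)` over `a ≤ s (m - 1) ≤ ⋯ ≤ s 0 ≤ b`, as an iterated integral. -/
noncomputable def iteratedIntegral (a : ℝ) : ℕ → (ℕ → ℝ → ℂ) → ℝ → ℂ
  | 0, _, _ => 1
  | m + 1, φ, b => ∫ x in a..b, φ 0 x * iteratedIntegral a m (fun i => φ (i + 1)) x

theorem iteratedIntegral_add_two_alternatingPhase (a : ℝ) (m : ℕ) (L : ℝ) :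
    iteratedIntegral a (m + 2) alternatingPhase (a + L) =
      ∫ s in (0 : ℝ)..L, alternatingPhase 0 (a + s) * ∫ r in (0 : ℝ)..s,
        alternatingPhase 1 (a + r) * iteratedIntegral a m alternatingPhase (a + r) := by
  have hshift (f : ℝ → ℂ) (L : ℝ) : ∫ s in a..(a + L), f s = ∫ s in (0 : ℝ)..L, f (a + s) := by
    rw [intervalIntegral.integral_comp_add_left, add_zero]
  simp only [iteratedIntegral, hshift, zero_add, add_assoc, Nat.reduceAdd, alternatingPhase_add_two]

theorem iteratedIntegral_alternatingPhase (a : ℝ) (k : ℕ) {L : ℝ} (hL : 0 ≤ L) :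
    iteratedIntegral a (2 * (k + 1)) alternatingPhase (a + L) =
      ((k + 1).factorial : ℂ)⁻¹ * gapIntegral a (sincConvPow k) L := by
  induction k generalizing L with
  | zero =>
    refine (iteratedIntegral_add_two_alternatingPhase a 0 L).trans ?_
    simp [iteratedIntegral, sincConvPow, gapIntegral_sinc a hL]
  | succ k ih =>
    have hinner {s : ℝ} (hs : 0 ≤ s) :
        ∫ r in (0 : ℝ)..s, alternatingPhase 1 (a + r) *
            iteratedIntegral a (2 * (k + 1)) alternatingPhase (a + r) =
          ((k + 1).factorial : ℂ)⁻¹ * ∫ r in (0 : ℝ)..s,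
            alternatingPhase 1 (a + r) * gapIntegral a (sincConvPow k) r := by
      rw [← intervalIntegral.integral_const_mul]
      refine intervalIntegral.integral_congr fun r hr => ?_
      rw [Set.uIcc_of_le hs] at hr
      rw [ih hr.1, mul_left_comm]
    have hfactorial : ((k + 1 + 1).factorial : ℂ)⁻¹ * (k + 2) = ((k + 1).factorial : ℂ)⁻¹ := by
      have hk : ((k + 1 + 1 : ℕ) : ℂ) = k + 2 := by push_cast; ring
      have hk_ne : (k + 2 : ℂ) ≠ 0 := by exact_mod_cast (k + 1).succ_ne_zero
      rw [Nat.factorial_succ, Nat.cast_mul, hk, mul_inv_rev, inv_mul_cancel_right₀ hk_ne]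
    rw [show 2 * (k + 1 + 1) = 2 * (k + 1) + 2 from rfl, iteratedIntegral_add_two_alternatingPhase,
      gapIntegral_sincConvPow_succ a k hL, ← mul_assoc, hfactorial,
      ← intervalIntegral.integral_const_mul]
    refine intervalIntegral.integral_congr fun s hs => ?_
    rw [Set.uIcc_of_le hL] at hs
    rw [hinner hs.1, mul_left_comm]

/-! ### Integrals over ordered simplices -/

theorem integral_fin_succ_pi {E : Type*} [NormedAddCommGroup E] [NormedSpace ℝ E] {m : ℕ}
    {f : (Fin (m + 1) → ℝ) → E} (hf : Integrable f) :
    ∫ s, f s = ∫ x : ℝ, ∫ t : Fin m → ℝ, f (Fin.cons x t) := by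
  have hpreserving := (volume_preserving_piFinSuccAbove (fun _ : Fin (m + 1) => ℝ) 0).symm
  have hprod := (hpreserving.integrable_comp_emb (MeasurableEquiv.measurableEmbedding _)).2 hf
  rw [← hpreserving.integral_comp']
  exact (integral_prod _ hprod).trans
    (by simp [MeasurableEquiv.piFinSuccAbove_symm_apply, Fin.insertNthEquiv])

/-- The points of `[a, b]ᵐ` with weakly decreasing coordinates. -/
def orderedSimplex (m : ℕ) (a b : ℝ) : Set (Fin m → ℝ) :=
  {s | Antitone s ∧ ∀ i, s i ∈ Set.Icc a b}

theorem isCompact_orderedSimplex (m : ℕ) (a b : ℝ) : IsCompact (orderedSimplex m a b) := by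
  have hcube : IsCompact {s : Fin m → ℝ | ∀ i, s i ∈ Set.Icc a b} := by
    simpa [Set.pi] using isCompact_univ_pi fun _ : Fin m => isCompact_Icc (a := a) (b := b)
  exact hcube.inter_left isClosed_antitone

theorem measurableSet_orderedSimplex (m : ℕ) (a b : ℝ) : MeasurableSet (orderedSimplex m a b) :=
  (isCompact_orderedSimplex m a b).measurableSet

theorem cons_mem_orderedSimplex {m : ℕ} {a b x : ℝ} {t : Fin m → ℝ} :
    (Fin.cons x t : Fin (m + 1) → ℝ) ∈ orderedSimplex (m + 1) a b ↔
      x ∈ Set.Icc a b ∧ t ∈ orderedSimplex m a x := by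
  simp only [orderedSimplex, Antitone, Set.mem_ofPred_eq, Fin.forall_fin_succ, Fin.cons_zero,
    Fin.cons_succ, Set.mem_Icc]
  simp only [Std.le_refl, imp_self, zero_le, forall_const, true_and, nonpos_iff_eq_zero,
    Fin.succ_ne_zero, IsEmpty.forall_iff, Fin.succ_le_succ_iff]
  grind

theorem setIntegral_orderedSimplex_succ {E : Type*} [NormedAddCommGroup E] [NormedSpace ℝ E]
    {m : ℕ} {a b : ℝ} (hab : a ≤ b) {f : (Fin (m + 1) → ℝ) → E}
    (hf : IntegrableOn f (orderedSimplex (m + 1) a b)) :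
    ∫ s in orderedSimplex (m + 1) a b, f s =
      ∫ x in a..b, ∫ t in orderedSimplex m a x, f (Fin.cons x t) := by
  rw [← integral_indicator (measurableSet_orderedSimplex _ a b),
    integral_fin_succ_pi (hf.integrable_indicator (measurableSet_orderedSimplex _ a b)),
    intervalIntegral.integral_of_le hab, ← integral_Icc_eq_integral_Ioc,
    ← integral_indicator measurableSet_Icc]
  congr 1 with x
  by_cases hx : x ∈ Set.Icc a b
  · rw [Set.indicator_of_mem hx, ← integral_indicator (measurableSet_orderedSimplex m a x)]
    congr 1 with t
    exact Set.indicator_eq_indicator (by rw [cons_mem_orderedSimplex, and_iff_right hx]) rfl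
  · simp [Set.indicator, cons_mem_orderedSimplex, hx]

theorem setIntegral_orderedSimplex_prod (m : ℕ) {a b : ℝ} (hab : a ≤ b) {φ : ℕ → ℝ → ℂ}
    (hφ : ∀ i, Continuous (φ i)) :
    ∫ s in orderedSimplex m a b, ∏ i : Fin m, φ i (s i) = iteratedIntegral a m φ b := by
  induction m generalizing φ b with
  | zero =>
    have huniv : orderedSimplex 0 a b = Set.univ := by
      ext s
      simp [orderedSimplex, Subsingleton.antitone]
    simp [huniv, iteratedIntegral, integral_unique, Measure.real, volume_pi]
  | succ m ih =>
    have hint : IntegrableOn (fun s : Fin (m + 1) → ℝ => ∏ i : Fin (m + 1), φ i (s i))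
        (orderedSimplex (m + 1) a b) :=
      ContinuousOn.integrableOn_compact (isCompact_orderedSimplex _ _ _)
        (Continuous.continuousOn (by fun_prop))
    rw [setIntegral_orderedSimplex_succ hab hint, iteratedIntegral]
    refine intervalIntegral.integral_congr fun x hx => ?_
    rw [Set.uIcc_of_le hab] at hx
    simp only [Fin.prod_univ_succ, Fin.cons_zero, Fin.cons_succ, Fin.val_zero, Fin.val_succ,
      integral_const_mul, ih hx.1 fun i => hφ (i + 1)]

theorem prod_range_alternatingPhase (u : ℕ → ℝ) (n : ℕ) :
    ∏ i ∈ Finset.range (2 * n), alternatingPhase i (u i) =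
      cexp (-I * ∑ k ∈ Finset.range n, ((u (2 * k) : ℂ) ^ 2 - (u (2 * k + 1) : ℂ) ^ 2)) := by
  induction n with
  | zero => simp
  | succ n ih =>
    have heven : (-1 : ℂ) ^ (2 * n) = 1 := (even_two_mul n).neg_one_pow
    have hodd : (-1 : ℂ) ^ (2 * n + 1) = -1 := (even_two_mul n).add_one.neg_one_pow
    rw [mul_add_one, Finset.prod_range_succ, Finset.prod_range_succ, ih, Finset.sum_range_succ,
      alternatingPhase, alternatingPhase, ← Complex.exp_add, ← Complex.exp_add]
    congr 1
    rw [heven, hodd]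
    ring

theorem prod_fin_alternatingPhase (n : ℕ) (s : Fin (2 * n) → ℝ) :
    ∏ i : Fin (2 * n), alternatingPhase i (s i) =
      cexp (-I * ∑ k : Fin n,
        ((s ⟨2 * k, by omega⟩ : ℂ) ^ 2 - (s ⟨2 * k + 1, by omega⟩ : ℂ) ^ 2)) := by
  let u (i : ℕ) : ℝ := if h : i < 2 * n then s ⟨i, h⟩ else 0
  have hu (i : ℕ) (h : i < 2 * n) : u i = s ⟨i, h⟩ := dif_pos h
  have hprod := prod_range_alternatingPhase u n
  rw [Finset.prod_range, Finset.sum_range] at hprod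
  have hfirst (k : Fin n) : u (2 * k) = s ⟨2 * k, by omega⟩ := hu _ _
  have hsecond (k : Fin n) : u (2 * k + 1) = s ⟨2 * k + 1, by omega⟩ := hu _ _
  simpa only [hu _ (Fin.is_lt _), hfirst, hsecond] using hprod

theorem gapIntegral_neg_two_mul (G : ℝ → ℝ) (T : ℝ) :
    gapIntegral (-T) G (2 * T) =
      (∫ Y in (0 : ℝ)..2 * T, (2 * T - Y) * G ((2 * T - Y) * Y) : ℝ) := by
  rw [gapIntegral, ← intervalIntegral.integral_ofReal]
  simp [gapPhase]

/-! ### Decay of the convolution powers -/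

theorem rpow_neg_mul_rpow_neg_le {b u v w : ℝ} (hb₀ : 0 ≤ b) (hb₁ : b ≤ 1) (hu : 0 < u) (hv : 0 < v)
    (hw : 0 < w) (hwuv : w ≤ u + v) :
    u ^ (-b) * v ^ (-b) ≤ w ^ (-b) * (u ^ (-b) + v ^ (-b)) := by
  have hsubadd : w ^ b ≤ u ^ b + v ^ b :=
    (Real.rpow_le_rpow hw.le hwuv hb₀).trans (Real.rpow_add_le_add_rpow hu.le hv.le hb₀ hb₁)
  simp only [Real.rpow_neg, hu.le, hv.le, hw.le]
  have := Real.rpow_pos_of_pos hu b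
  have := Real.rpow_pos_of_pos hv b
  have := Real.rpow_pos_of_pos hw b
  field_simp
  linarith

theorem continuousOn_one_add_rpow (p : ℝ) :
    ContinuousOn (fun y : ℝ => (1 + y) ^ p) (Set.Ici 0) := fun y (hy : 0 ≤ y) =>
  ((continuousAt_const.add continuousAt_id).rpow_const
    (.inl (by positivity : 1 + y ≠ 0))).continuousWithinAt

theorem intervalIntegrable_one_add_rpow (p : ℝ) {z : ℝ} (hz : 0 ≤ z) :
    IntervalIntegrable (fun y : ℝ => (1 + y) ^ p) volume 0 z :=
  ((continuousOn_one_add_rpow p).mono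
    (Set.uIcc_of_le hz ▸ Set.Icc_subset_Ici_self)).intervalIntegrable

theorem integral_one_add_rpow_neg_le {b : ℝ} (hb : b < 1) (z : ℝ) :
    ∫ y in (0 : ℝ)..z, (1 + y) ^ (-b) ≤ (1 + z) ^ (1 - b) / (1 - b) := by
  rw [intervalIntegral.integral_comp_add_left (fun y => y ^ (-b)),
    integral_rpow (.inl (by linarith)), neg_add_eq_sub, add_zero, Real.one_rpow]
  have : 0 < 1 - b := sub_pos.2 hb
  gcongr
  linarith

theorem integral_one_add_sub_rpow (p z : ℝ) :
    ∫ y in (0 : ℝ)..z, (1 + (z - y)) ^ p = ∫ y in (0 : ℝ)..z, (1 + y) ^ p := by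
  simp [intervalIntegral.integral_comp_sub_left (fun y => (1 + y) ^ p) z]

theorem intervalIntegrable_one_add_sub_rpow (p : ℝ) {z : ℝ} (hz : 0 ≤ z) :
    IntervalIntegrable (fun y : ℝ => (1 + (z - y)) ^ p) volume 0 z := by
  simpa using ((intervalIntegrable_one_add_rpow p hz).comp_sub_left z).symm

theorem intervalIntegrable_one_add_sub_rpow_mul (p : ℝ) {z : ℝ} (hz : 0 ≤ z) :
    IntervalIntegrable (fun y : ℝ => (1 + (z - y)) ^ p * (1 + y) ^ p) volume 0 z :=
  (intervalIntegrable_one_add_sub_rpow p hz).mul_continuousOn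
    ((continuousOn_one_add_rpow p).mono (Set.uIcc_of_le hz ▸ Set.Icc_subset_Ici_self))

theorem causalConv_one_add_rpow_neg_le {p z : ℝ} (hp₀ : 0 ≤ p) (hp₁ : p < 1) (hz : 0 ≤ z) :
    causalConv (fun y => (1 + y) ^ (-p)) (fun y => (1 + y) ^ (-p)) z ≤
      2 / (1 - p) * (1 + z) ^ (1 - 2 * p) := by
  have hint := intervalIntegrable_one_add_rpow (-p) hz
  have hint' := intervalIntegrable_one_add_sub_rpow (-p) hz
  have hpointwise (y : ℝ) (hy : y ∈ Set.Icc 0 z) : (1 + (z - y)) ^ (-p) * (1 + y) ^ (-p) ≤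
      (1 + z) ^ (-p) * ((1 + (z - y)) ^ (-p) + (1 + y) ^ (-p)) :=
    rpow_neg_mul_rpow_neg_le (w := 1 + z) hp₀ hp₁.le (by linarith [hy.2]) (by linarith [hy.1])
      (by linarith) (by linarith)
  calc causalConv (fun y => (1 + y) ^ (-p)) (fun y => (1 + y) ^ (-p)) z
      ≤ ∫ y in (0 : ℝ)..z, (1 + z) ^ (-p) * ((1 + (z - y)) ^ (-p) + (1 + y) ^ (-p)) :=
        intervalIntegral.integral_mono_on hz (intervalIntegrable_one_add_sub_rpow_mul (-p) hz)
          ((hint'.add hint).const_mul _) hpointwise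
    _ = (1 + z) ^ (-p) * (2 * ∫ y in (0 : ℝ)..z, (1 + y) ^ (-p)) := by
        rw [intervalIntegral.integral_const_mul, intervalIntegral.integral_add hint' hint,
          integral_one_add_sub_rpow, two_mul]
    _ ≤ (1 + z) ^ (-p) * (2 * ((1 + z) ^ (1 - p) / (1 - p))) := by
        gcongr
        exact integral_one_add_rpow_neg_le hp₁ z
    _ = 2 / (1 - p) * (1 + z) ^ (1 - 2 * p) := by
        rw [show 1 - 2 * p = -p + (1 - p) by ring, Real.rpow_add (by linarith)]
        ring

/-- Decay on the half-line at least as fast as every power `(1 + z) ^ (-b)` with `b < 1`. Unlike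
the bound `O(1 / z)`, which picks up logarithms, this is stable under `causalConv`. -/
def DecaysAlmostInv (f : ℝ → ℝ) : Prop :=
  ∀ b ∈ Set.Ioo (0 : ℝ) 1, ∃ C, ∀ z, 0 ≤ z → |f z| ≤ C * (1 + z) ^ (-b)

namespace DecaysAlmostInv

variable {f g : ℝ → ℝ}

theorem of_mul_abs_le (hf : Continuous f) {C : ℝ} (hC : ∀ z, 0 ≤ z → z * |f z| ≤ C) :
    DecaysAlmostInv f := by
  intro b hb
  obtain ⟨M, hM⟩ := isCompact_Icc.exists_bound_of_continuousOn (s := Set.Icc (0 : ℝ) 1)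
    hf.continuousOn
  have hC₀ : 0 ≤ C := by simpa using hC 0 le_rfl
  have hM₀ : 0 ≤ M := (norm_nonneg _).trans (hM 0 (by simp))
  have hbound (z : ℝ) (hz : 0 ≤ z) : |f z| ≤ M + C := by
    rcases le_total z 1 with hz₁ | hz₁
    · linarith [hM z ⟨hz, hz₁⟩, Real.norm_eq_abs (f z)]
    · linarith [hC z hz, le_mul_of_one_le_left (abs_nonneg (f z)) hz₁]
  refine ⟨M + 2 * C, fun z hz => ?_⟩
  calc |f z| ≤ (M + 2 * C) * (1 + z) ^ (-1 : ℝ) := by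
        rw [Real.rpow_neg_one, ← div_eq_mul_inv, le_div_iff₀ (by linarith)]
        linarith [hC z hz, hbound z hz]
    _ ≤ (M + 2 * C) * (1 + z) ^ (-b) := by
        gcongr
        · linarith
        · exact hb.2.le

theorem add (hf : DecaysAlmostInv f) (hg : DecaysAlmostInv g) :
    DecaysAlmostInv fun z => f z + g z := by
  intro b hb
  obtain ⟨C, hC⟩ := hf b hb
  obtain ⟨D, hD⟩ := hg b hb
  refine ⟨C + D, fun z hz => (abs_add_le _ _).trans ?_⟩
  rw [add_mul]
  exact add_le_add (hC z hz) (hD z hz)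

theorem const_mul (hf : DecaysAlmostInv f) (c : ℝ) : DecaysAlmostInv fun z => c * f z := by
  intro b hb
  obtain ⟨C, hC⟩ := hf b hb
  refine ⟨|c| * C, fun z hz => ?_⟩
  rw [abs_mul, mul_assoc]
  exact mul_le_mul_of_nonneg_left (hC z hz) (abs_nonneg c)

theorem congr (hf : DecaysAlmostInv f) (hfg : ∀ z, 0 ≤ z → f z = g z) : DecaysAlmostInv g :=
  fun b hb => (hf b hb).imp fun _ hC z hz => hfg z hz ▸ hC z hz

-- Bounding both factors with the exponent `(1 + b) / 2` leaves room for the integration.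
protected theorem causalConv (hf : DecaysAlmostInv f) (hg : DecaysAlmostInv g) :
    DecaysAlmostInv (causalConv f g) := by
  intro b hb
  obtain ⟨p, hp⟩ : ∃ p, 2 * p = 1 + b := ⟨(1 + b) / 2, by ring⟩
  have hp₀ : 0 < p := by linarith [hb.1]
  have hp₁ : p < 1 := by linarith [hb.2]
  obtain ⟨C, hC⟩ := hf p ⟨hp₀, hp₁⟩
  obtain ⟨D, hD⟩ := hg p ⟨hp₀, hp₁⟩
  have hC₀ : 0 ≤ C := by simpa using (abs_nonneg _).trans (hC 0 le_rfl)
  have hD₀ : 0 ≤ D := by simpa using (abs_nonneg _).trans (hD 0 le_rfl)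
  refine ⟨C * D * (2 / (1 - p)), fun z hz => ?_⟩
  have hpointwise (y : ℝ) (hy : y ∈ Set.Ioc 0 z) :
      ‖f (z - y) * g y‖ ≤ C * D * ((1 + (z - y)) ^ (-p) * (1 + y) ^ (-p)) := by
    have hzy : 0 ≤ z - y := sub_nonneg.2 hy.2
    rw [norm_mul, mul_mul_mul_comm]
    exact mul_le_mul (hC _ hzy) (hD _ hy.1.le) (norm_nonneg _) (by positivity)
  calc |causalConv f g z|
      ≤ ∫ y in (0 : ℝ)..z, C * D * ((1 + (z - y)) ^ (-p) * (1 + y) ^ (-p)) :=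
        intervalIntegral.norm_integral_le_of_norm_le hz (.of_forall hpointwise)
          ((intervalIntegrable_one_add_sub_rpow_mul (-p) hz).const_mul _)
    _ = C * D * causalConv (fun y => (1 + y) ^ (-p)) (fun y => (1 + y) ^ (-p)) z :=
        intervalIntegral.integral_const_mul _ _
    _ ≤ C * D * (2 / (1 - p) * (1 + z) ^ (1 - 2 * p)) :=
        mul_le_mul_of_nonneg_left (causalConv_one_add_rpow_neg_le hp₀.le hp₁ hz) (by positivity)
    _ = C * D * (2 / (1 - p)) * (1 + z) ^ (-b) := by
        rw [← mul_assoc, show 1 - 2 * p = -b by linarith]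

end DecaysAlmostInv

theorem decaysAlmostInv_sinc : DecaysAlmostInv Real.sinc := by
  refine .of_mul_abs_le Real.continuous_sinc (C := 1) fun z hz => ?_
  rw [← abs_of_nonneg hz, ← abs_mul, abs_of_nonneg hz, mul_sinc]
  exact Real.abs_sin_le_one z

theorem decaysAlmostInv_sincConvPow : ∀ k, DecaysAlmostInv (sincConvPow k)
  | 0 => decaysAlmostInv_sinc
  | k + 1 => decaysAlmostInv_sinc.causalConv (decaysAlmostInv_sincConvPow k)

/-! ### The sine integral -/

section SineIntegral

theorem integrableOn_exp_neg_mul_Ioi {y : ℝ} (hy : 0 < y) :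
    IntegrableOn (fun t => Real.exp (-(y * t))) (Set.Ioi 0) := by
  simpa using exp_neg_integrableOn_Ioi 0 hy

theorem integral_exp_neg_mul_Ioi {y : ℝ} (hy : 0 < y) :
    ∫ t in Set.Ioi (0 : ℝ), Real.exp (-(y * t)) = y⁻¹ := by
  simpa [neg_div_neg_eq] using integral_exp_mul_Ioi (neg_lt_zero.2 hy) 0

theorem integral_sin_mul_exp_neg_mul_Ioi {y : ℝ} (hy : 0 < y) :
    ∫ t in Set.Ioi (0 : ℝ), Real.sin y * Real.exp (-(y * t)) = Real.sinc y := by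
  rw [integral_const_mul, integral_exp_neg_mul_Ioi hy, Real.sinc_of_ne_zero hy.ne', div_eq_mul_inv]

theorem integral_sin_mul_exp_neg_mul (t z : ℝ) :
    ∫ y in (0 : ℝ)..z, Real.sin y * Real.exp (-(y * t)) =
      (1 + t ^ 2)⁻¹ - Real.exp (-(z * t)) * (Real.cos z + t * Real.sin z) / (1 + t ^ 2) := by
  have ht : 1 + t ^ 2 ≠ 0 := by positivity
  have hderiv (y : ℝ) : HasDerivAt
      (fun y => -(Real.exp (-(y * t)) * (Real.cos y + t * Real.sin y)) / (1 + t ^ 2))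
      (Real.sin y * Real.exp (-(y * t))) y := by
    have hexp : HasDerivAt (fun y => Real.exp (-(y * t))) (Real.exp (-(y * t)) * -(1 * t)) y :=
      ((hasDerivAt_id y).mul_const t).neg.exp
    have htrig := (Real.hasDerivAt_cos y).add ((Real.hasDerivAt_sin y).const_mul t)
    refine ((hexp.mul htrig).neg.div_const (1 + t ^ 2)).congr_deriv ?_
    simp only [Pi.add_apply]
    field_simp
    ring
  rw [intervalIntegral.integral_eq_sub_of_hasDerivAt (fun y _ => hderiv y)
    (Continuous.intervalIntegrable (by fun_prop) _ _)]
  simp only [zero_mul, neg_zero, Real.exp_zero, Real.cos_zero, Real.sin_zero, mul_zero, add_zero,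
    mul_one]
  ring

theorem integrable_sin_mul_exp_neg_mul {z : ℝ} (hz : 0 ≤ z) :
    Integrable (Function.uncurry fun y t : ℝ => Real.sin y * Real.exp (-(y * t)))
      ((volume.restrict (Set.uIoc 0 z)).prod (volume.restrict (Set.Ioi 0))) := by
  rw [integrable_prod_iff (Continuous.aestronglyMeasurable (by fun_prop)), Set.uIoc_of_le hz]
  refine ⟨(ae_restrict_iff' measurableSet_Ioc).2 (.of_forall fun y hy =>
    (integrableOn_exp_neg_mul_Ioi hy.1).const_mul (Real.sin y)), ?_⟩
  have hsinc : IntegrableOn (fun y => |Real.sinc y|) (Set.Ioc 0 z) :=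
    (Real.continuous_sinc.abs.continuousOn.integrableOn_compact isCompact_Icc).mono_set
      Set.Ioc_subset_Icc_self
  refine hsinc.congr_fun (fun y hy => ?_) measurableSet_Ioc
  simp only [Function.uncurry, norm_mul, Real.norm_eq_abs, Real.abs_exp]
  rw [integral_const_mul, integral_exp_neg_mul_Ioi hy.1, Real.sinc_of_ne_zero hy.1.ne', abs_div,
    abs_of_pos hy.1, div_eq_mul_inv]

theorem abs_cos_add_mul_sin_div_le (z : ℝ) {t : ℝ} (ht : 0 ≤ t) :
    |(Real.cos z + t * Real.sin z) / (1 + t ^ 2)| ≤ 2 := by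
  have hpos : 0 < 1 + t ^ 2 := by positivity
  rw [abs_div, abs_of_pos hpos, div_le_iff₀ hpos]
  calc |Real.cos z + t * Real.sin z| ≤ |Real.cos z| + t * |Real.sin z| := by
        simpa [abs_mul, abs_of_nonneg ht] using abs_add_le (Real.cos z) (t * Real.sin z)
    _ ≤ 1 + t * 1 := by gcongr <;> simp [Real.abs_cos_le_one, Real.abs_sin_le_one]
    _ ≤ 2 * (1 + t ^ 2) := by nlinarith [sq_nonneg (t - 1)]

-- Writing `1 / y` as `∫ exp (-y t) dt` and exchanging the integrals gives `∫ dt / (1 + t²)` up to a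
-- remainder of size `∫ exp (-z t) dt`.
theorem abs_integral_sinc_sub_pi_div_two_le {z : ℝ} (hz : 0 < z) :
    |(∫ y in (0 : ℝ)..z, Real.sinc y) - π / 2| ≤ 2 / z := by
  let R (t : ℝ) : ℝ := Real.exp (-(z * t)) * (Real.cos z + t * Real.sin z) / (1 + t ^ 2)
  have hR_cont : Continuous R :=
    Continuous.div (by fun_prop) (by fun_prop) fun t => by positivity
  have hR_le : ∀ᵐ t ∂volume.restrict (Set.Ioi 0), ‖R t‖ ≤ 2 * Real.exp (-(z * t)) := by
    refine (ae_restrict_iff' measurableSet_Ioi).2 (.of_forall fun t (ht : 0 < t) => ?_)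
    simp only [R, mul_div_assoc]
    rw [norm_mul, Real.norm_eq_abs, Real.abs_exp, mul_comm]
    exact mul_le_mul_of_nonneg_right (abs_cos_add_mul_sin_div_le z ht.le) (Real.exp_pos _).le
  have hbound_int := (integrableOn_exp_neg_mul_Ioi hz).const_mul 2
  have hsinc : ∫ y in (0 : ℝ)..z, Real.sinc y = π / 2 - ∫ t in Set.Ioi 0, R t :=
    calc ∫ y in (0 : ℝ)..z, Real.sinc y
        = ∫ y in (0 : ℝ)..z, ∫ t in Set.Ioi 0, Real.sin y * Real.exp (-(y * t)) := by
          rw [intervalIntegral.integral_of_le hz.le, intervalIntegral.integral_of_le hz.le]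
          exact setIntegral_congr_fun measurableSet_Ioc fun y hy =>
            (integral_sin_mul_exp_neg_mul_Ioi hy.1).symm
      _ = ∫ t in Set.Ioi 0, ((1 + t ^ 2)⁻¹ - R t) := by
          rw [intervalIntegral_integral_swap (integrable_sin_mul_exp_neg_mul hz.le)]
          simp only [integral_sin_mul_exp_neg_mul, R]
      _ = π / 2 - ∫ t in Set.Ioi 0, R t := by
          rw [integral_sub integrable_inv_one_add_sq.integrableOn
            (hbound_int.mono' hR_cont.aestronglyMeasurable hR_le), integral_Ioi_inv_one_add_sq,
            Real.arctan_zero, sub_zero]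
  rw [hsinc, sub_sub_cancel_left, abs_neg]
  refine (norm_integral_le_of_norm_le hbound_int hR_le).trans_eq ?_
  rw [integral_const_mul, integral_exp_neg_mul_Ioi hz, div_eq_mul_inv]

end SineIntegral

theorem decaysAlmostInv_integral_sinc_sub :
    DecaysAlmostInv fun z => (∫ y in (0 : ℝ)..z, Real.sinc y) - π / 2 := by
  have hcont : Continuous fun z => ∫ y in (0 : ℝ)..z, Real.sinc y :=
    intervalIntegral.continuous_primitive
      (fun _ _ => Real.continuous_sinc.intervalIntegrable _ _) 0
  refine .of_mul_abs_le (hcont.sub continuous_const) (C := 2) fun z hz => ?_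
  rcases hz.eq_or_lt with rfl | hz
  · simp
  · rw [← le_div_iff₀' hz]
    exact abs_integral_sinc_sub_pi_div_two_le hz

theorem decaysAlmostInv_integral_sincConvPow_sub (k : ℕ) :
    DecaysAlmostInv fun z => (∫ y in (0 : ℝ)..z, sincConvPow k y) - (π / 2) ^ (k + 1) := by
  induction k with
  | zero => simpa [sincConvPow] using decaysAlmostInv_integral_sinc_sub
  | succ k ih =>
    refine ((decaysAlmostInv_sinc.causalConv ih).add
      (decaysAlmostInv_integral_sinc_sub.const_mul ((π / 2) ^ (k + 1)))).congr fun z hz => ?_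
    have hcont := continuous_sincConvPow k
    have hprim : Continuous fun z => ∫ y in (0 : ℝ)..z, sincConvPow k y :=
      intervalIntegral.continuous_primitive (fun _ _ => hcont.intervalIntegrable _ _) 0
    rw [sincConvPow, causalConv.integral_eq Real.continuous_sinc hcont hz,
      causalConv.sub_const_right Real.continuous_sinc hprim]
    ring

/-! ### The Abelian limit -/

theorem hasDerivAt_div_one_add_sq (x : ℝ) :
    HasDerivAt (fun x : ℝ => x / (1 + x ^ 2)) ((1 - x ^ 2) / (1 + x ^ 2) ^ 2) x := by
  refine ((hasDerivAt_id x).div (((hasDerivAt_id x).pow 2).const_add 1)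
    (by positivity : 1 + x ^ 2 ≠ 0)).congr_deriv ?_
  simp only [id_eq, Pi.pow_apply]
  ring

theorem abs_one_sub_sq_div_one_add_sq_sq_le (x : ℝ) :
    |(1 - x ^ 2) / (1 + x ^ 2) ^ 2| ≤ (1 + x ^ 2)⁻¹ := by
  have hpos : 0 < 1 + x ^ 2 := by positivity
  rw [abs_div, abs_of_pos (pow_pos hpos 2), div_le_iff₀ (pow_pos hpos 2), pow_two (1 + x ^ 2),
    inv_mul_cancel_left₀ hpos.ne']
  exact abs_le.2 ⟨by linarith [sq_nonneg x], by linarith [sq_nonneg x]⟩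

/-- The integrand that remains when `2 G(T² - x²)` is written as the sum of its multiples by
`1 / (1 + x²)` and by `x² / (1 + x²)`, and the second is integrated by parts with the primitive
`∫ G - c` of `G`. -/
noncomputable def partsRemainder (G : ℝ → ℝ) (c T x : ℝ) : ℝ :=
  (1 - x ^ 2) / (1 + x ^ 2) ^ 2 * ((∫ y in (0 : ℝ)..(T ^ 2 - x ^ 2), G y) - c) +
    2 * G (T ^ 2 - x ^ 2) / (1 + x ^ 2)

theorem two_mul_integral_comp_sq_sub_sq {G : ℝ → ℝ} (hG : Continuous G) (c T : ℝ) :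
    2 * ∫ x in (0 : ℝ)..T, G (T ^ 2 - x ^ 2) =
      c * T / (1 + T ^ 2) + ∫ x in (0 : ℝ)..T, partsRemainder G c T x := by
  have : Continuous fun z => ∫ y in (0 : ℝ)..z, G y :=
    intervalIntegral.continuous_primitive (fun _ _ => hG.intervalIntegrable _ _) 0
  have hderiv (x : ℝ) : HasDerivAt
      (fun x => x / (1 + x ^ 2) * ((∫ y in (0 : ℝ)..(T ^ 2 - x ^ 2), G y) - c))
      (partsRemainder G c T x - 2 * G (T ^ 2 - x ^ 2)) x := by
    have hprim_deriv := ((hG.integral_hasStrictDerivAt 0 (T ^ 2 - x ^ 2)).hasDerivAt.sub_const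
      c).comp x (((hasDerivAt_id x).pow 2).const_sub (T ^ 2))
    refine ((hasDerivAt_div_one_add_sq x).mul hprim_deriv).congr_deriv ?_
    have : 1 + x ^ 2 ≠ 0 := by positivity
    simp only [id_eq, Function.comp_apply, Pi.pow_apply, partsRemainder]
    field_simp
    ring
  have hrest : Continuous (partsRemainder G c T) := by
    unfold partsRemainder
    fun_prop (disch := intro; positivity)
  have hmain : Continuous fun x => 2 * G (T ^ 2 - x ^ 2) := by fun_prop
  have hftc := intervalIntegral.integral_eq_sub_of_hasDerivAt (fun x _ => hderiv x)
    ((hrest.sub hmain).intervalIntegrable 0 T)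
  rw [intervalIntegral.integral_sub (hrest.intervalIntegrable _ _) (hmain.intervalIntegrable _ _),
    intervalIntegral.integral_const_mul] at hftc
  simp only [sub_self, intervalIntegral.integral_same, zero_sub, zero_div, zero_mul,
    sub_zero] at hftc
  linear_combination -hftc

theorem rpow_neg_div_le {b u v w : ℝ} (hb : b ≤ 1) (hu : 0 < u) (hv : 0 < v)
    (huw : u ≤ w) (hwuv : w ≤ u + v) :
    u ^ (-b) / v ≤ w ^ (-b) / v + u ^ (-b) / w := by
  have hw : 0 < w := hu.trans_le huw
  have mul_rpow_neg {x : ℝ} (hx : 0 < x) : x * x ^ (-b) = x ^ (1 - b) := by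
    rw [sub_eq_add_neg, Real.rpow_add hx, Real.rpow_one]
  have hmul : u * u ^ (-b) ≤ w * w ^ (-b) := by
    rw [mul_rpow_neg hu, mul_rpow_neg hw]
    gcongr
  have hmul' : w * u ^ (-b) ≤ (u + v) * u ^ (-b) := by gcongr
  field_simp
  linarith

theorem intervalIntegrable_one_add_sq_sub_sq_rpow_div (p : ℝ) {T : ℝ} (hT : 0 ≤ T) :
    IntervalIntegrable (fun x => (1 + (T ^ 2 - x ^ 2)) ^ p / (1 + x ^ 2)) volume 0 T := by
  refine ContinuousOn.intervalIntegrable fun x hx => ContinuousAt.continuousWithinAt ?_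
  rw [Set.uIcc_of_le hT] at hx
  have hu : 1 + (T ^ 2 - x ^ 2) ≠ 0 := by nlinarith [hx.1, hx.2]
  have hv : 1 + x ^ 2 ≠ 0 := by positivity
  fun_prop (disch := first | assumption | exact .inl hu)

theorem integral_one_add_sq_sub_sq_rpow_div_le {p T : ℝ} (hp₀ : 0 ≤ p) (hp₁ : p < 1)
    (hT : 1 ≤ T) :
    ∫ x in (0 : ℝ)..T, (1 + (T ^ 2 - x ^ 2)) ^ (-p) / (1 + x ^ 2) ≤
      (π / 2 + 1 / (1 - p)) * (1 + T ^ 2) ^ (-p) := by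
  have hT₀ : 0 ≤ T := by linarith
  have : 0 < 1 - p := sub_pos.2 hp₁
  have hpointwise (x : ℝ) (hx : x ∈ Set.Icc 0 T) :
      (1 + (T ^ 2 - x ^ 2)) ^ (-p) / (1 + x ^ 2) ≤
        (1 + T ^ 2) ^ (-p) * (1 + x ^ 2)⁻¹ + (1 + T ^ 2)⁻¹ * (1 + (T - x)) ^ (-p) := by
    have hfactor : 1 + (T - x) ≤ 1 + (T ^ 2 - x ^ 2) := by nlinarith [hx.1, hx.2]
    have hlinear : 0 < 1 + (T - x) := by linarith [hx.2]
    refine (rpow_neg_div_le (w := 1 + T ^ 2) hp₁.le (hlinear.trans_le hfactor)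
      (by positivity) (by linarith [sq_nonneg x]) (by linarith)).trans ?_
    rw [div_eq_mul_inv, div_eq_inv_mul]
    gcongr _ + _ * ?_
    exact Real.rpow_le_rpow_of_nonpos hlinear hfactor (neg_nonpos.2 hp₀)
  have hint₁ : IntervalIntegrable (fun x : ℝ => (1 + T ^ 2) ^ (-p) * (1 + x ^ 2)⁻¹) volume 0 T :=
    (integrable_inv_one_add_sq.intervalIntegrable).const_mul _
  have hint₂ := (intervalIntegrable_one_add_sub_rpow (-p) hT₀).const_mul (1 + T ^ 2)⁻¹
  calc ∫ x in (0 : ℝ)..T, (1 + (T ^ 2 - x ^ 2)) ^ (-p) / (1 + x ^ 2)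
      ≤ (1 + T ^ 2) ^ (-p) * Real.arctan T + (1 + T ^ 2)⁻¹ * ∫ x in (0 : ℝ)..T, (1 + x) ^ (-p) := by
        refine (intervalIntegral.integral_mono_on hT₀
          (intervalIntegrable_one_add_sq_sub_sq_rpow_div (-p) hT₀) (hint₁.add hint₂)
          hpointwise).trans_eq ?_
        rw [intervalIntegral.integral_add hint₁ hint₂, intervalIntegral.integral_const_mul,
          intervalIntegral.integral_const_mul, integral_inv_one_add_sq, Real.arctan_zero, sub_zero,
          integral_one_add_sub_rpow]
    _ ≤ (1 + T ^ 2) ^ (-p) * (π / 2) + (1 + T ^ 2)⁻¹ * ((1 + T ^ 2) ^ (1 - p) / (1 - p)) := by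
        have hT_sq : 1 + T ≤ 1 + T ^ 2 := by nlinarith
        gcongr
        · exact (Real.arctan_lt_pi_div_two T).le
        · refine (integral_one_add_rpow_neg_le hp₁ T).trans ?_
          gcongr
    _ = (π / 2 + 1 / (1 - p)) * (1 + T ^ 2) ^ (-p) := by
        rw [sub_eq_add_neg 1 p, Real.rpow_add (by positivity), Real.rpow_one]
        field_simp

section Abelian

variable {G : ℝ → ℝ} {c p C D T : ℝ}

theorem abs_partsRemainder_le (hC : ∀ z, 0 ≤ z → |G z| ≤ C * (1 + z) ^ (-p))
    (hD : ∀ z, 0 ≤ z → |(∫ y in (0 : ℝ)..z, G y) - c| ≤ D * (1 + z) ^ (-p)) {x : ℝ}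
    (hx : x ^ 2 ≤ T ^ 2) :
    |partsRemainder G c T x| ≤
      (D + 2 * C) * ((1 + (T ^ 2 - x ^ 2)) ^ (-p) / (1 + x ^ 2)) := by
  have hz : 0 ≤ T ^ 2 - x ^ 2 := sub_nonneg.2 hx
  have hpos : 0 < 1 + x ^ 2 := by positivity
  calc |partsRemainder G c T x|
      ≤ |(1 - x ^ 2) / (1 + x ^ 2) ^ 2| * |(∫ y in (0 : ℝ)..(T ^ 2 - x ^ 2), G y) - c| +
          2 * |G (T ^ 2 - x ^ 2)| / (1 + x ^ 2) := by
        refine (abs_add_le _ _).trans_eq ?_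
        simp only [abs_mul, abs_div _ (1 + x ^ 2), abs_two, abs_of_pos hpos]
    _ ≤ (1 + x ^ 2)⁻¹ * (D * (1 + (T ^ 2 - x ^ 2)) ^ (-p)) +
          2 * (C * (1 + (T ^ 2 - x ^ 2)) ^ (-p)) / (1 + x ^ 2) := by
        gcongr
        exacts [abs_one_sub_sq_div_one_add_sq_sq_le x, hD _ hz, hC _ hz]
    _ = (D + 2 * C) * ((1 + (T ^ 2 - x ^ 2)) ^ (-p) / (1 + x ^ 2)) := by ring

theorem abs_integral_partsRemainder_le (hp₀ : 0 ≤ p) (hp₁ : p < 1) (hT : 1 ≤ T)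
    (hC : ∀ z, 0 ≤ z → |G z| ≤ C * (1 + z) ^ (-p))
    (hD : ∀ z, 0 ≤ z → |(∫ y in (0 : ℝ)..z, G y) - c| ≤ D * (1 + z) ^ (-p)) :
    |∫ x in (0 : ℝ)..T, partsRemainder G c T x| ≤
      (D + 2 * C) * ((π / 2 + 1 / (1 - p)) * (1 + T ^ 2) ^ (-p)) := by
  have hT₀ : 0 ≤ T := by linarith
  have hC₀ : 0 ≤ C := by simpa using (abs_nonneg _).trans (hC 0 le_rfl)
  have hD₀ : 0 ≤ D := by simpa using (abs_nonneg _).trans (hD 0 le_rfl)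
  have hpointwise (x : ℝ) (hx : x ∈ Set.Ioc 0 T) : ‖partsRemainder G c T x‖ ≤
      (D + 2 * C) * ((1 + (T ^ 2 - x ^ 2)) ^ (-p) / (1 + x ^ 2)) :=
    abs_partsRemainder_le hC hD (pow_le_pow_left₀ hx.1.le hx.2 2)
  refine (intervalIntegral.norm_integral_le_of_norm_le hT₀ (.of_forall hpointwise)
    ((intervalIntegrable_one_add_sq_sub_sq_rpow_div (-p) hT₀).const_mul _)).trans ?_
  rw [intervalIntegral.integral_const_mul]
  gcongr
  exact integral_one_add_sq_sub_sq_rpow_div_le hp₀ hp₁ hT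

theorem abs_two_mul_integral_comp_sq_sub_sq_sub_le (hG : Continuous G) (hp₀ : 0 ≤ p) (hp₁ : p < 1)
    (hT : 1 ≤ T) (hC : ∀ z, 0 ≤ z → |G z| ≤ C * (1 + z) ^ (-p))
    (hD : ∀ z, 0 ≤ z → |(∫ y in (0 : ℝ)..z, G y) - c| ≤ D * (1 + z) ^ (-p)) :
    |2 * T * (∫ x in (0 : ℝ)..T, G (T ^ 2 - x ^ 2)) - c| ≤
      |c| / (1 + T ^ 2) +
        (D + 2 * C) * (π / 2 + 1 / (1 - p)) * (1 + T ^ 2) ^ (1 / 2 - p) := by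
  have hT₀ : 0 ≤ T := by linarith
  have hpos : 0 < 1 + T ^ 2 := by positivity
  have hT_le : T ≤ (1 + T ^ 2) ^ (1 / 2 : ℝ) := by
    rw [← Real.sqrt_eq_rpow]
    exact Real.le_sqrt_of_sq_le (by linarith)
  have hsplit : 2 * T * (∫ x in (0 : ℝ)..T, G (T ^ 2 - x ^ 2)) - c =
      -(c / (1 + T ^ 2)) + T * ∫ x in (0 : ℝ)..T, partsRemainder G c T x := by
    rw [mul_right_comm, two_mul_integral_comp_sq_sub_sq hG c T]
    field_simp
    ring
  calc |2 * T * (∫ x in (0 : ℝ)..T, G (T ^ 2 - x ^ 2)) - c|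
      ≤ |c| / (1 + T ^ 2) + T * |∫ x in (0 : ℝ)..T, partsRemainder G c T x| := by
        rw [hsplit]
        refine (abs_add_le _ _).trans_eq ?_
        rw [abs_neg, abs_div, abs_mul, abs_of_pos hpos, abs_of_nonneg hT₀]
    _ ≤ |c| / (1 + T ^ 2) + (1 + T ^ 2) ^ (1 / 2 : ℝ) *
          ((D + 2 * C) * ((π / 2 + 1 / (1 - p)) * (1 + T ^ 2) ^ (-p))) := by
        gcongr
        exact abs_integral_partsRemainder_le hp₀ hp₁ hT hC hD
    _ = |c| / (1 + T ^ 2) +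
          (D + 2 * C) * (π / 2 + 1 / (1 - p)) * (1 + T ^ 2) ^ (1 / 2 - p) := by
        rw [sub_eq_add_neg (1 / 2), Real.rpow_add hpos]
        ring

theorem tendsto_two_mul_integral_comp_sq_sub_sq (hG : Continuous G)
    (hG_decay : DecaysAlmostInv G)
    (hprim_decay : DecaysAlmostInv fun z => (∫ y in (0 : ℝ)..z, G y) - c) :
    Tendsto (fun T => 2 * T * ∫ x in (0 : ℝ)..T, G (T ^ 2 - x ^ 2)) atTop (𝓝 c) := by
  obtain ⟨C, hC⟩ := hG_decay (3 / 4) (by norm_num)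
  obtain ⟨D, hD⟩ := hprim_decay (3 / 4) (by norm_num)
  have hsq : Tendsto (fun T : ℝ => 1 + T ^ 2) atTop atTop :=
    tendsto_atTop_add_const_left _ _ (tendsto_pow_atTop two_ne_zero)
  have hrpow : Tendsto (fun T : ℝ => (1 + T ^ 2) ^ (1 / 2 - 3 / 4 : ℝ)) atTop (𝓝 0) := by
    convert (tendsto_rpow_neg_atTop (by norm_num : (0 : ℝ) < 1 / 4)).comp hsq using 3
    norm_num
  have hbound : Tendsto (fun T : ℝ => |c| / (1 + T ^ 2) +
      (D + 2 * C) * (π / 2 + 1 / (1 - 3 / 4)) * (1 + T ^ 2) ^ (1 / 2 - 3 / 4 : ℝ)) atTop (𝓝 0) := by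
    simpa using (hsq.const_div_atTop |c|).add (hrpow.const_mul _)
  refine tendsto_iff_norm_sub_tendsto_zero.2 (squeeze_zero' (.of_forall fun _ => norm_nonneg _)
    ((eventually_ge_atTop 1).mono fun T hT => ?_) hbound)
  exact abs_two_mul_integral_comp_sq_sub_sq_sub_le hG (by norm_num) (by norm_num) hT hC hD

end Abelian

theorem integral_two_mul_sub_mul_comp {G : ℝ → ℝ} (hG : Continuous G) (T : ℝ) :
    ∫ Y in (0 : ℝ)..(2 * T), (2 * T - Y) * G ((2 * T - Y) * Y) =
      2 * T * ∫ x in (0 : ℝ)..T, G (T ^ 2 - x ^ 2) := by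
  let I (a b : ℝ) : ℝ := ∫ x in a..b, (T - x) * G (T ^ 2 - x ^ 2)
  have hcenter : ∫ Y in (0 : ℝ)..(2 * T), (2 * T - Y) * G ((2 * T - Y) * Y) = I (-T) T := by
    have hshift := intervalIntegral.integral_comp_add_left (a := -T) (b := T)
      (fun Y => (2 * T - Y) * G ((2 * T - Y) * Y)) T
    rw [add_neg_cancel, ← two_mul] at hshift
    rw [← hshift]
    congr 1 with x
    ring_nf
  have hleft : I (-T) 0 = ∫ x in (0 : ℝ)..T, (T + x) * G (T ^ 2 - x ^ 2) := by
    have hreflect := intervalIntegral.integral_comp_neg (a := 0) (b := T)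
      (fun x => (T - x) * G (T ^ 2 - x ^ 2))
    rw [neg_zero] at hreflect
    simp only [I, ← hreflect, sub_neg_eq_add, neg_sq]
  have hint (a b : ℝ) : IntervalIntegrable (fun x => (T - x) * G (T ^ 2 - x ^ 2)) volume a b :=
    Continuous.intervalIntegrable (by fun_prop) a b
  calc ∫ Y in (0 : ℝ)..(2 * T), (2 * T - Y) * G ((2 * T - Y) * Y)
      = I (-T) 0 + I 0 T := by
        rw [hcenter]
        exact (intervalIntegral.integral_add_adjacent_intervals (hint (-T) 0) (hint 0 T)).symm
    _ = ∫ x in (0 : ℝ)..T, 2 * T * G (T ^ 2 - x ^ 2) := by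
        rw [hleft, ← intervalIntegral.integral_add
          (Continuous.intervalIntegrable (by fun_prop) _ _) (hint 0 T)]
        congr 1 with x
        ring
    _ = 2 * T * ∫ x in (0 : ℝ)..T, G (T ^ 2 - x ^ 2) := intervalIntegral.integral_const_mul _ _

theorem setIntegral_orderedSimplex_cexp (k : ℕ) {T : ℝ} (hT : 0 ≤ T) :
    ∫ s in orderedSimplex (2 * (k + 1)) (-T) T,
        cexp (-I * ∑ i : Fin (k + 1),
          ((s ⟨2 * i, by omega⟩ : ℂ) ^ 2 - (s ⟨2 * i + 1, by omega⟩ : ℂ) ^ 2)) =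
      (1 / (k + 1).factorial *
        (2 * T * ∫ x in (0 : ℝ)..T, sincConvPow k (T ^ 2 - x ^ 2)) : ℝ) := by
  have hiterated := iteratedIntegral_alternatingPhase (-T) k (mul_nonneg zero_le_two hT)
  rw [show -T + 2 * T = T by ring, gapIntegral_neg_two_mul,
    integral_two_mul_sub_mul_comp (continuous_sincConvPow k)] at hiterated
  simp only [← prod_fin_alternatingPhase]
  rw [setIntegral_orderedSimplex_prod _ (by linarith) continuous_alternatingPhase, hiterated]
  push_cast
  rw [one_div]

/-- For every positive integer `n`, the iterated improper complex integral
`J_n = ∫_{-∞}^{∞} ds₁ e^{−is₁²} ∫_{-∞}^{s₁} ds₂ e^{is₂²} ⋯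
       ∫_{-∞}^{s_{2n-1}} ds_{2n} e^{is_{2n}²}`,
understood as the limit as `T → ∞` of the integral over the simplex
`{(s₁,…,s_{2n}) : −T ≤ s_{2n} ≤ ⋯ ≤ s₁ ≤ T}` of
`exp(−i(s₁² − s₂² + s₃² − s₄² + ⋯ + s_{2n−1}² − s_{2n}²))`,
converges and equals `(1/n!)·(π/2)ⁿ` (a real number). -/
theorem Jn_eq (n : ℕ) (hn : 0 < n) :
    Tendsto (fun T : ℝ =>
        ∫ s in {s : Fin (2 * n) → ℝ |
            (∀ i j : Fin (2 * n), i ≤ j → s j ≤ s i) ∧ ∀ i, -T ≤ s i ∧ s i ≤ T},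
          Complex.exp (-Complex.I *
            (∑ k : Fin n,
              (((s ⟨2 * k.1, by have := k.isLt; omega⟩ : ℝ) : ℂ) ^ 2 -
               ((s ⟨2 * k.1 + 1, by have := k.isLt; omega⟩ : ℝ) : ℂ) ^ 2))))
      atTop (𝓝 (((1 / n.factorial * (π / 2) ^ n : ℝ) : ℂ))) := by
  obtain ⟨k, rfl⟩ := Nat.exists_eq_succ_of_ne_zero hn.ne'
  have hlimit : Tendsto (fun T => 1 / (k + 1).factorial *
      (2 * T * ∫ x in (0 : ℝ)..T, sincConvPow k (T ^ 2 - x ^ 2)))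
      atTop (𝓝 (1 / (k + 1).factorial * (π / 2) ^ (k + 1))) :=
    (tendsto_two_mul_integral_comp_sq_sub_sq (continuous_sincConvPow k)
      (decaysAlmostInv_sincConvPow k) (decaysAlmostInv_integral_sincConvPow_sub k)).const_mul _
  exact ((continuous_ofReal.tendsto _).comp hlimit).congr'
    ((eventually_ge_atTop 0).mono fun T hT => (setIntegral_orderedSimplex_cexp k hT).symm)
end

section
/- For 0 < α < 1, the function Ĩ(α) = ∫₀^{∞} (dx/x) ∫₀^{x} (dy/y) [cos(x − αy) − cos x] is differentiable in α with derivative dĨ/dα = −ln(1 − α)/α. -/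
open Real MeasureTheory Filter Topology intervalIntegral

/-!
Substituting `y = x t` turns the inner integral into `∫₀¹ (cos ((1 - α t) x) - cos x) / t dt`.
After exchanging the integrals, the integral over `x` is a truncated Frullani integral, with value
`-log |1 - α t|` in the limit and bounded by `2 |log |1 - α t||` before it. By dominated convergence
`Ĩ(α) = -∫₀¹ log |1 - α t| / t dt = -∫₀^α log |1 - s| / s ds`, which is the dilogarithm. The only
properties of the cosine that matter are that it is even, Lipschitz and bounded, has a bounded
primitive, and takes the value `1` at `0`.
-/

section Dilogarithm

/-- The dilogarithm `Li₂(α) = -∫₀^α log (1 - s) / s ds` of a real number. Since `Real.log x` is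
`log |x|`, this is the real part of `Li₂(α)` on the branch cut `α > 1`. -/
noncomputable def dilog (α : ℝ) : ℝ := -∫ s in (0 : ℝ)..α, log (1 - s) / s

lemma abs_log_one_sub_div_le (s : ℝ) : |log (1 - s) / s| ≤ 2 + 2 * |log (1 - s)| := by
  rw [abs_div]
  refine div_le_of_le_mul₀ (abs_nonneg s) (by positivity) ?_
  rcases le_total (1 / 2) |s| with hs | hs
  · nlinarith [abs_nonneg (log (1 - s))]
  · have hs' := abs_le.mp hs
    have hpos : 0 < 1 - s := by linarith
    have hupper : log (1 - s) ≤ -s := by linarith [log_le_sub_one_of_pos hpos]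
    have hlower : -(2 * |s|) ≤ log (1 - s) := by
      refine le_trans ?_ (one_sub_inv_le_log_of_pos hpos)
      rw [neg_le_sub_iff_le_add, inv_le_iff_one_le_mul₀ hpos]
      nlinarith [le_abs_self s, neg_abs_le s]
    have hlog : |log (1 - s)| ≤ 2 * |s| :=
      abs_le.mpr ⟨hlower, by linarith [neg_le_abs s, abs_nonneg s]⟩
    nlinarith [abs_nonneg s, abs_nonneg (log (1 - s))]

lemma intervalIntegrable_log_one_sub_div (a b : ℝ) :
    IntervalIntegrable (fun s => log (1 - s) / s) volume a b := by
  have hlog : IntervalIntegrable (fun s => log (1 - s)) volume a b := by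
    simpa using (intervalIntegrable_log' (a := 1 - a) (b := 1 - b)).comp_sub_left 1
  exact (intervalIntegrable_const.add (hlog.abs.const_mul 2)).mono_fun'
    (Measurable.aestronglyMeasurable (by fun_prop)) (.of_forall abs_log_one_sub_div_le)

lemma intervalIntegrable_log_one_sub_mul_div (α a b : ℝ) :
    IntervalIntegrable (fun t => log (1 - α * t) / t) volume a b := by
  rcases eq_or_ne α 0 with rfl | hα
  · simp
  · have h := ((intervalIntegrable_log_one_sub_div (α * a) (α * b)).comp_mul_left
      (c := α)).const_mul α
    rw [mul_div_cancel_left₀ a hα, mul_div_cancel_left₀ b hα] at h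
    refine h.congr fun t _ => ?_
    rw [← mul_div_assoc, mul_div_mul_left _ _ hα]

lemma hasDerivAt_dilog {α : ℝ} (h0 : α ≠ 0) (h1 : α ≠ 1) :
    HasDerivAt dilog (-log (1 - α) / α) α := by
  have hcont : ContinuousAt (fun s => log (1 - s) / s) α := by
    have : 1 - α ≠ 0 := sub_ne_zero.mpr h1.symm
    fun_prop (disch := assumption)
  have hmeas : Measurable fun s : ℝ => log (1 - s) / s := by fun_prop
  rw [neg_div]
  exact (integral_hasDerivAt_right (intervalIntegrable_log_one_sub_div 0 α)
    hmeas.stronglyMeasurable.stronglyMeasurableAtFilter hcont).neg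

lemma integral_neg_log_one_sub_mul_div (α : ℝ) :
    ∫ t in (0 : ℝ)..1, -log (1 - α * t) / t = dilog α := by
  rcases eq_or_ne α 0 with rfl | hα
  · simp [dilog]
  · have h := Frullani.integral_comp_mul_inv_smul (f := fun s => log (1 - s)) (ε := 0) (r := 1) hα
    simp only [smul_eq_mul, ← div_eq_inv_mul, mul_zero, mul_one] at h
    simp only [dilog, neg_div, intervalIntegral.integral_neg, h]

end Dilogarithm

section Frullani

variable {E : Type*} [NormedAddCommGroup E] [NormedSpace ℝ E] {f F : ℝ → E} {C a b p q : ℝ}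

lemma integral_inv_smul_comp_mul_sub_comp_mul (hf : LocallyIntegrableOn f (Set.Ioi 0))
    (ha : 0 < a) (hb : 0 < b) (hp : 0 < p) (hq : 0 < q) :
    ∫ x in p..q, x⁻¹ • (f (a * x) - f (b * x)) =
      (∫ x in (a * p)..(b * p), x⁻¹ • f x) - ∫ x in (a * q)..(b * q), x⁻¹ • f x := by
  have hint {c d : ℝ} (hc : 0 < c) (hd : 0 < d) :
      IntervalIntegrable (fun x => x⁻¹ • f x) volume c d :=
    Frullani.intervalIntegrable_inv_smul hf hc hd
  simp_rw [smul_sub]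
  rw [integral_sub (Frullani.intervalIntegrable_inv_smul_comp_mul hf hp hq ha)
      (Frullani.intervalIntegrable_inv_smul_comp_mul hf hp hq hb),
    Frullani.integral_comp_mul_inv_smul ha.ne', Frullani.integral_comp_mul_inv_smul hb.ne',
    integral_interval_sub_interval_comm (hint (by positivity) (by positivity))
      (hint (by positivity) (by positivity)) (hint (by positivity) (by positivity))]

variable [CompleteSpace E]

lemma norm_integral_inv_smul_comp_mul_sub_comp_mul_le
    (hf : LocallyIntegrableOn f (Set.Ioi 0)) (hfC : ∀ x, ‖f x‖ ≤ C)
    (ha : 0 < a) (hb : 0 < b) (hp : 0 < p) (hq : 0 < q) :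
    ‖∫ x in p..q, x⁻¹ • (f (a * x) - f (b * x))‖ ≤ 2 * C * |log (b / a)| := by
  have hscale {r : ℝ} (hr : 0 < r) :
      ‖∫ x in (a * r)..(b * r), x⁻¹ • f x‖ ≤ C * |log (b / a)| := by
    have h := Frullani.norm_integral_inv_smul_sub_le hf (mul_pos ha hr) (mul_pos hb hr) (V := 0)
      ((norm_nonneg (f 0)).trans (hfC 0)) fun x _ => by simpa using hfC x
    rwa [smul_zero, sub_zero, mul_div_mul_right _ _ hr.ne'] at h
  rw [integral_inv_smul_comp_mul_sub_comp_mul hf ha hb hp hq]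
  calc _ ≤ C * |log (b / a)| + C * |log (b / a)| := norm_sub_le_of_le (hscale hp) (hscale hq)
    _ = 2 * C * |log (b / a)| := by ring

lemma norm_integral_inv_smul_le_of_norm_primitive_le (hf : Continuous f)
    (hF : ∀ x, HasDerivAt F (f x) x) (hFC : ∀ x, ‖F x‖ ≤ C) (ha : 0 < a) (hb : 0 < b) :
    ‖∫ x in a..b, x⁻¹ • f x‖ ≤ 2 * C * (a⁻¹ + b⁻¹) := by
  have hne : ∀ x ∈ Set.uIcc a b, x ≠ 0 := fun x hx => ((lt_min ha hb).trans_le hx.1).ne'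
  have hinv : ∀ x ∈ Set.uIcc a b, HasDerivAt (fun x : ℝ => x⁻¹) (-(x ^ 2)⁻¹) x :=
    fun x hx => hasDerivAt_inv (hne x hx)
  have hint : IntervalIntegrable (fun x : ℝ => -(x ^ 2)⁻¹) volume a b :=
    ContinuousOn.intervalIntegrable fun x hx => by
      have := hne x hx
      fun_prop (disch := positivity)
  have hsmul (r x : ℝ) : ‖r • F x‖ ≤ C * |r| := by
    rw [norm_smul, norm_eq_abs, mul_comm]
    exact mul_le_mul_of_nonneg_right (hFC x) (abs_nonneg r)
  have ha' : 0 < a⁻¹ := inv_pos.mpr ha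
  have hb' : 0 < b⁻¹ := inv_pos.mpr hb
  have hremainder : ‖∫ x in a..b, -(x ^ 2)⁻¹ • F x‖ ≤ C * (a⁻¹ + b⁻¹) := by
    have hC : 0 ≤ C := (norm_nonneg (F 0)).trans (hFC 0)
    calc _ ≤ |∫ x in a..b, C * -(-(x ^ 2)⁻¹)| := by
          refine norm_integral_le_abs_of_norm_le (.of_forall fun x => ?_) (hint.neg.const_mul C)
          exact (hsmul _ x).trans_eq (by rw [abs_neg, neg_neg, abs_of_nonneg (by positivity)])
      _ = C * |a⁻¹ - b⁻¹| := by
          rw [intervalIntegral.integral_const_mul, intervalIntegral.integral_neg,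
            integral_eq_sub_of_hasDerivAt hinv hint, neg_sub, abs_mul, abs_of_nonneg hC]
      _ ≤ C * (a⁻¹ + b⁻¹) := by
          gcongr
          exact abs_le.mpr ⟨by linarith, by linarith⟩
  rw [integral_smul_deriv_eq_deriv_smul hinv (fun x _ => hF x) hint (hf.intervalIntegrable a b)]
  calc _ ≤ C * |b⁻¹| + C * |a⁻¹| + C * (a⁻¹ + b⁻¹) :=
        norm_sub_le_of_le (norm_sub_le_of_le (hsmul _ b) (hsmul _ a)) hremainder
    _ = 2 * C * (a⁻¹ + b⁻¹) := by
        rw [abs_of_pos ha', abs_of_pos hb']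
        ring

lemma tendsto_integral_inv_smul_atTop_of_norm_primitive_le (hf : Continuous f)
    (hF : ∀ x, HasDerivAt F (f x) x) (hFC : ∀ x, ‖F x‖ ≤ C) (ha : 0 < a) (hb : 0 < b) :
    Tendsto (fun r => ∫ x in (a * r)..(b * r), x⁻¹ • f x) atTop (𝓝 0) := by
  have hlim : Tendsto (fun r => 2 * C * ((a * r)⁻¹ + (b * r)⁻¹)) atTop (𝓝 0) := by
    have hinv {c : ℝ} (hc : 0 < c) : Tendsto (fun r => (c * r)⁻¹) atTop (𝓝 0) :=
      tendsto_inv_atTop_zero.comp (tendsto_id.const_mul_atTop hc)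
    simpa using ((hinv ha).add (hinv hb)).const_mul (2 * C)
  refine squeeze_zero_norm' ?_ hlim
  filter_upwards [eventually_gt_atTop 0] with r hr
  exact norm_integral_inv_smul_le_of_norm_primitive_le hf hF hFC (mul_pos ha hr) (mul_pos hb hr)

/- Mathlib's `Frullani.tendsto_intervalIntegral` requires a limit of `f` at infinity; here a bounded
primitive takes its place. -/
theorem tendsto_integral_inv_smul_comp_mul_sub_comp_mul (hf : Continuous f)
    (hF : ∀ x, HasDerivAt F (f x) x) (hFC : ∀ x, ‖F x‖ ≤ C) (ha : 0 < a) (hb : 0 < b) :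
    Tendsto (fun p : ℝ × ℝ => ∫ x in p.1..p.2, x⁻¹ • (f (a * x) - f (b * x)))
      (𝓝[>] 0 ×ˢ atTop) (𝓝 (log (b / a) • f 0)) := by
  have hloc : LocallyIntegrableOn f (Set.Ioi 0) := hf.locallyIntegrable.locallyIntegrableOn _
  have hzero := Frullani.tendsto_integral_inv_smul_nhdsWithin hloc ha hb
    (hf.continuousAt.tendsto.mono_left nhdsWithin_le_nhds)
  have htop := tendsto_integral_inv_smul_atTop_of_norm_primitive_le hf hF hFC ha hb
  rw [← sub_zero (log (b / a) • f 0)]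
  refine ((hzero.comp tendsto_fst).sub (htop.comp tendsto_snd)).congr' ?_
  filter_upwards [prod_mem_prod self_mem_nhdsWithin (Ioi_mem_atTop 0)] with p ⟨hp, hq⟩
  exact (integral_inv_smul_comp_mul_sub_comp_mul hloc ha hb hp hq).symm

end Frullani

section FrullaniKernel

variable {E : Type*} [NormedAddCommGroup E] [NormedSpace ℝ E] {f F : ℝ → E} {K : NNReal}
  {C α p q t x : ℝ}

/-- The integrand `(f ((1 - α t) x) - f x) / (x t)` which the substitution `y = x t` produces from
`(f (x - α y) - f x) / (x y)`, as a function of `x` and `t`. -/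
noncomputable def frullaniKernel (f : ℝ → E) (α x t : ℝ) : E :=
  (x * t)⁻¹ • (f ((1 - α * t) * x) - f x)

lemma norm_frullaniKernel_le (hf : LipschitzWith K f) (α x t : ℝ) :
    ‖frullaniKernel f α x t‖ ≤ K * |α| := by
  have hlip : ‖f ((1 - α * t) * x) - f x‖ ≤ K * |α| * |x * t| := by
    refine (hf.norm_sub_le _ _).trans_eq ?_
    rw [show (1 - α * t) * x - x = -(α * (x * t)) by ring, norm_neg, norm_mul, norm_eq_abs,
      norm_eq_abs, mul_assoc]
  rw [frullaniKernel, norm_smul, norm_inv, norm_eq_abs, ← div_eq_inv_mul]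
  exact div_le_of_le_mul₀ (abs_nonneg _) (by positivity) hlip

lemma integrableOn_frullaniKernel (hf : LipschitzWith K f) (α a b c d : ℝ) :
    IntegrableOn (frullaniKernel f α).uncurry (Set.uIoc a b ×ˢ Set.uIoc c d) := by
  have hcont : Continuous fun z : ℝ × ℝ => f ((1 - α * z.2) * z.1) - f z.1 := by
    have := hf.continuous
    fun_prop
  have hinv : Measurable fun z : ℝ × ℝ => (z.1 * z.2)⁻¹ := by fun_prop
  have hfinite : volume (Set.uIoc a b ×ˢ Set.uIoc c d) ≠ ⊤ := by
    simp [Measure.volume_eq_prod, Set.uIoc, ENNReal.mul_eq_top]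
  exact IntegrableOn.of_bound hfinite.lt_top
    (hinv.aestronglyMeasurable.smul hcont.aestronglyMeasurable) (K * |α|)
    (.of_forall fun z => norm_frullaniKernel_le hf α z.1 z.2)

lemma integral_frullaniKernel_right (hx : x ≠ 0) :
    ∫ t in (0 : ℝ)..1, frullaniKernel f α x t =
      x⁻¹ • ∫ y in (0 : ℝ)..x, y⁻¹ • (f (x - α * y) - f x) := by
  have h := Frullani.integral_comp_mul_inv_smul (f := fun y => f (x - α * y) - f x)
    (ε := 0) (r := 1) hx
  rw [mul_zero, mul_one] at h
  rw [← h, ← intervalIntegral.integral_smul]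
  congr with t
  rw [frullaniKernel, mul_inv, mul_smul, show (1 - α * t) * x = x - α * (x * t) by ring]

lemma integral_frullaniKernel_left (hf : f.Even) (α p q t : ℝ) :
    ∫ x in p..q, frullaniKernel f α x t =
      t⁻¹ • ∫ x in p..q, x⁻¹ • (f (|1 - α * t| * x) - f x) := by
  rw [← intervalIntegral.integral_smul]
  congr with x
  have habs : f (|1 - α * t| * x) = f ((1 - α * t) * x) := by
    rcases abs_choice (1 - α * t) with h | h <;> simp only [h, neg_mul, hf _]
  rw [habs, frullaniKernel, mul_comm, mul_inv, mul_smul]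

lemma integral_integral_frullaniKernel_swap (hf : LipschitzWith K f) (hp : 0 < p) (hq : 0 < q) :
    ∫ t in (0 : ℝ)..1, ∫ x in p..q, frullaniKernel f α x t =
      ∫ x in p..q, x⁻¹ • ∫ y in (0 : ℝ)..x, y⁻¹ • (f (x - α * y) - f x) := by
  rw [← intervalIntegral_intervalIntegral_swap (integrableOn_frullaniKernel hf α p q 0 1)]
  refine integral_congr fun x hx => integral_frullaniKernel_right ?_
  exact ((lt_min hp hq).trans_le hx.1).ne'

lemma aestronglyMeasurable_integral_frullaniKernel (hf : LipschitzWith K f) (α p q c d : ℝ) :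
    AEStronglyMeasurable (fun t => ∫ x in p..q, frullaniKernel f α x t)
      (volume.restrict (Set.uIoc c d)) := by
  have hint := integrableOn_frullaniKernel hf α p q c d
  rw [IntegrableOn, Measure.volume_eq_prod, ← Measure.prod_restrict] at hint
  simp only [intervalIntegral_eq_integral_uIoc]
  exact hint.integral_prod_right.aestronglyMeasurable.const_smul _

variable [CompleteSpace E]

lemma norm_integral_frullaniKernel_le (hf : Continuous f) (hfC : ∀ x, ‖f x‖ ≤ C)
    (hf_even : f.Even) (ht : 1 - α * t ≠ 0) (hp : 0 < p) (hq : 0 < q) :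
    ‖∫ x in p..q, frullaniKernel f α x t‖ ≤ 2 * C * |log (1 - α * t) / t| := by
  have h := norm_integral_inv_smul_comp_mul_sub_comp_mul_le
    (hf.locallyIntegrable.locallyIntegrableOn _) hfC (abs_pos.mpr ht) one_pos hp hq
  simp only [one_mul, one_div, log_inv, log_abs, abs_neg] at h
  rw [integral_frullaniKernel_left hf_even, norm_smul, norm_inv, norm_eq_abs, abs_div,
    ← div_eq_inv_mul, ← mul_div_assoc]
  gcongr

lemma tendsto_integral_frullaniKernel (hf : Continuous f) (hF : ∀ x, HasDerivAt F (f x) x)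
    (hFC : ∀ x, ‖F x‖ ≤ C) (hf_even : f.Even) (ht : 1 - α * t ≠ 0) :
    Tendsto (fun p : ℝ × ℝ => ∫ x in p.1..p.2, frullaniKernel f α x t)
      (𝓝[>] 0 ×ˢ atTop) (𝓝 ((-log (1 - α * t) / t) • f 0)) := by
  have h := (tendsto_integral_inv_smul_comp_mul_sub_comp_mul hf hF hFC
    (abs_pos.mpr ht) one_pos).const_smul t⁻¹
  simpa only [integral_frullaniKernel_left hf_even, one_mul, one_div, log_inv, log_abs,
    smul_smul, ← div_eq_inv_mul] using h

theorem tendsto_integral_integral_frullaniKernel {C' : ℝ} (hf : LipschitzWith K f)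
    (hfC : ∀ x, ‖f x‖ ≤ C) (hF : ∀ x, HasDerivAt F (f x) x) (hFC : ∀ x, ‖F x‖ ≤ C')
    (hf_even : f.Even) (α : ℝ) :
    Tendsto (fun p : ℝ × ℝ => ∫ t in (0 : ℝ)..1, ∫ x in p.1..p.2, frullaniKernel f α x t)
      (𝓝[>] 0 ×ˢ atTop) (𝓝 (dilog α • f 0)) := by
  have hae : ∀ᵐ t : ℝ, 1 - α * t ≠ 0 := by
    filter_upwards [volume.ae_ne α⁻¹] with t ht h
    exact ht (eq_inv_of_mul_eq_one_right (sub_eq_zero.mp h).symm)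
  rw [← integral_neg_log_one_sub_mul_div, ← intervalIntegral.integral_smul_const]
  refine intervalIntegral.tendsto_integral_filter_of_dominated_convergence _ ?_ ?_
    ((intervalIntegrable_log_one_sub_mul_div α 0 1).abs.const_mul (2 * C)) ?_
  · exact .of_forall fun p => aestronglyMeasurable_integral_frullaniKernel hf α p.1 p.2 0 1
  · filter_upwards [prod_mem_prod self_mem_nhdsWithin (Ioi_mem_atTop 0)] with p ⟨hp, hq⟩
    filter_upwards [hae] with t ht _
    exact norm_integral_frullaniKernel_le hf.continuous hfC hf_even ht hp hq
  · filter_upwards [hae] with t ht _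
    exact tendsto_integral_frullaniKernel hf.continuous hF hFC hf_even ht

end FrullaniKernel

theorem Itilde_hasDerivAt_general {E : Type*} [NormedAddCommGroup E] [NormedSpace ℝ E]
    [CompleteSpace E] {f F : ℝ → E} {K : NNReal} {C C' : ℝ} (hf : LipschitzWith K f)
    (hfC : ∀ x, ‖f x‖ ≤ C) (hF : ∀ x, HasDerivAt F (f x) x) (hFC : ∀ x, ‖F x‖ ≤ C')
    (hf_even : f.Even) :
    ∃ Itilde : ℝ → E,
      (∀ α : ℝ,
        Tendsto (fun p : ℝ × ℝ =>
            ∫ x in p.1..p.2, x⁻¹ • ∫ y in (0 : ℝ)..x, y⁻¹ • (f (x - α * y) - f x))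
          (𝓝[>] 0 ×ˢ atTop) (𝓝 (Itilde α))) ∧
      ∀ α : ℝ, α ≠ 0 → α ≠ 1 → HasDerivAt Itilde ((-log (1 - α) / α) • f 0) α := by
  refine ⟨fun α => dilog α • f 0, fun α => ?_, fun α h0 h1 => (hasDerivAt_dilog h0 h1).smul_const _⟩
  refine (tendsto_integral_integral_frullaniKernel hf hfC hF hFC hf_even α).congr' ?_
  filter_upwards [prod_mem_prod self_mem_nhdsWithin (Ioi_mem_atTop 0)] with p ⟨hp, hq⟩
  exact integral_integral_frullaniKernel_swap hf hp hq

/-- For `0 ≤ α ≤ 1`, the improper integral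
`Ĩ(α) = ∫₀^{∞} (dx/x) ∫₀^{x} (dy/y) [cos(x − αy) − cos x]`
(defined as the limit `ε → 0⁺`, `T → ∞` of the corresponding proper integrals)
exists, and for `0 < α < 1` the function `Ĩ` is differentiable in `α` with
derivative `dĨ/dα = −ln(1 − α)/α`. -/
theorem Itilde_hasDerivAt :
    ∃ Itilde : ℝ → ℝ,
      (∀ α ∈ Set.Icc (0 : ℝ) 1,
        Tendsto (fun p : ℝ × ℝ =>
            ∫ x in p.1..p.2, (1 / x) *
              ∫ y in (0 : ℝ)..x, (Real.cos (x - α * y) - Real.cos x) / y)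
          ((𝓝[>] (0 : ℝ)) ×ˢ atTop) (𝓝 (Itilde α))) ∧
      ∀ α ∈ Set.Ioo (0 : ℝ) 1,
        HasDerivAt Itilde (-Real.log (1 - α) / α) α := by
  obtain ⟨Itilde, hlim, hderiv⟩ := Itilde_hasDerivAt_general lipschitzWith_cos abs_cos_le_one
    hasDerivAt_sin abs_sin_le_one cos_neg
  exact ⟨Itilde, fun α _ => by simpa [div_eq_inv_mul] using hlim α,
    fun α hα => by simpa using hderiv α hα.1.ne' hα.2.ne⟩
end

section
/- For all real ω₁ and ω₂, the improper double integral ∫_{-∞}^{∞} ds₁ ∫_{-∞}^{∞} ds₂ e^{iω₁s₁}·e^{−is₂(ω₁−ω₂)}·cos(s₁² − s₂²) converges and equals π·cos[(1/4)·ω₂·(2ω₁ − ω₂)]. -/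
open Real Complex Filter Topology intervalIntegral

/-!
Writing `cos θ = (e^{iθ} + e^{-iθ}) / 2` turns the double integral into products of two
one-dimensional Fresnel integrals with quadratic phases of opposite sign. Completing the square
identifies each of these, up to a constant phase, with an integral of `exp (-z ^ 2)` over a line
`arg z = ±π / 4`. In the sector `|arg z| ≤ π / 4`, Cauchy's theorem on the triangle with vertices
`0`, `Re z`, `z` shows that the integrals of `exp (-z ^ 2)` from `0` to `z` and from `0` to `Re z`
differ by an integral over a vertical segment which is `O(1 / |z|)`, so every ray in this sector
yields `√π / 2`. The phases `e^{±iπ/4}` produced by the two directions cancel in the products.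
-/

section ImproperIntegral

variable {E : Type*} [NormedAddCommGroup E] [NormedSpace ℝ E]

lemma integral_zero_neg_of_even {f : ℝ → E} (hf : Function.Even f) (T : ℝ) :
    ∫ s in (0 : ℝ)..-T, f s = -∫ s in (0 : ℝ)..T, f s := by
  have h := integral_comp_neg (a := 0) (b := T) f
  simp only [hf _, neg_zero] at h
  rw [h, integral_symm]

lemma tendsto_integral_atBot_atTop_of_even {f : ℝ → E} {L : E} {ι : Type*} {l : Filter ι}
    {x y : ι → ℝ} (hf : Function.Even f)
    (hint : ∀ a b, IntervalIntegrable f MeasureTheory.volume a b)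
    (hL : Tendsto (fun T => ∫ s in (0 : ℝ)..T, f s) atTop (𝓝 L))
    (hx : Tendsto x l atBot) (hy : Tendsto y l atTop) :
    Tendsto (fun i => ∫ s in x i..y i, f s) l (𝓝 (2 • L)) := by
  have hneg : Tendsto (fun i => ∫ s in (0 : ℝ)..x i, f s) l (𝓝 (-L)) := by
    simpa [integral_zero_neg_of_even hf, Function.comp_def] using
      (hL.comp (tendsto_neg_atBot_atTop.comp hx)).neg
  have hsub := (hL.comp hy).sub hneg
  rw [sub_neg_eq_add, ← two_nsmul] at hsub
  exact hsub.congr fun i => integral_interval_sub_left (hint 0 (y i)) (hint 0 (x i))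

end ImproperIntegral

section Triangle

variable {f : ℂ → ℂ}

lemma integral_comp_add_mul_mul_of_hasDerivAt {F : ℂ → ℂ} (hF : ∀ z, HasDerivAt F (f z) z)
    (hf : Continuous f) (z d : ℂ) (a b : ℝ) :
    ∫ s in a..b, f (z + d * s) * d = F (z + d * b) - F (z + d * a) := by
  have hline (s : ℝ) : HasDerivAt (fun s : ℝ => z + d * s) d s := by
    simpa using (Complex.ofRealCLM.hasDerivAt.const_mul d).const_add z
  exact integral_eq_sub_of_hasDerivAt (fun s _ => (hF _).comp s (hline s))
    (Continuous.intervalIntegrable (by fun_prop) _ _)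

lemma integral_triangle_of_differentiable (hf : Differentiable ℂ f) (u v : ℂ) (T : ℝ) :
    ∫ s in (0 : ℝ)..T, f ((u + v) * s) * (u + v) =
      (∫ s in (0 : ℝ)..T, f (u * s) * u) + ∫ s in (0 : ℝ)..T, f (u * T + v * s) * v := by
  obtain ⟨F, hF⟩ := hf.isExactOn_univ
  have hline := integral_comp_add_mul_mul_of_hasDerivAt (fun z => hF z trivial) hf.continuous
  have hhyp := hline 0 (u + v) 0 T
  have hbase := hline 0 u 0 T
  have hside := hline (u * T) v 0 T
  simp only [zero_add, ofReal_zero, mul_zero, add_zero] at hhyp hbase hside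
  rw [hhyp, hbase, hside, add_mul]
  ring

end Triangle

section GaussianRay

lemma norm_cexp_neg_sq_le {a m s T : ℝ} (hm : |m| ≤ a) (hs : 0 ≤ s) (hsT : s ≤ T) :
    ‖cexp (-(a * T + m * I * s) ^ 2)‖ ≤ rexp (a ^ 2 * T * (s - T)) := by
  have hm2 : m ^ 2 ≤ a ^ 2 := sq_le_sq' (abs_le.1 hm).1 (abs_le.1 hm).2
  have hre : (-(a * T + m * I * s : ℂ) ^ 2).re = m ^ 2 * s ^ 2 - a ^ 2 * T ^ 2 := by
    simp [pow_two]
    ring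
  rw [Complex.norm_exp, hre, Real.exp_le_exp]
  calc m ^ 2 * s ^ 2 - a ^ 2 * T ^ 2 ≤ a ^ 2 * (T * s) - a ^ 2 * T ^ 2 := by
        gcongr
        nlinarith
    _ = a ^ 2 * T * (s - T) := by ring

lemma integral_exp_mul_sub_le {k : ℝ} (hk : 0 < k) (T : ℝ) :
    ∫ s in (0 : ℝ)..T, rexp (k * (s - T)) ≤ 1 / k := by
  have hderiv (s : ℝ) : HasDerivAt (fun s => rexp (k * (s - T)) / k) (rexp (k * (s - T))) s := by
    simpa [hk.ne'] using ((((hasDerivAt_id s).sub_const T).const_mul k).exp).div_const k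
  rw [integral_eq_sub_of_hasDerivAt (fun s _ => hderiv s)
    (Continuous.intervalIntegrable (by fun_prop) _ _), sub_self, mul_zero, Real.exp_zero]
  exact sub_le_self _ (by positivity)

lemma norm_integral_cexp_neg_sq_vertical_le {a m T : ℝ} (ha : 0 < a) (hm : |m| ≤ a) (hT : 0 < T) :
    ‖∫ s in (0 : ℝ)..T, cexp (-(a * T + m * I * s) ^ 2) * (m * I)‖ ≤ 1 / (a * T) := by
  calc ‖∫ s in (0 : ℝ)..T, cexp (-(a * T + m * I * s) ^ 2) * (m * I)‖
      ≤ ∫ s in (0 : ℝ)..T, rexp (a ^ 2 * T * (s - T)) * a := by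
        refine norm_integral_le_of_norm_le hT.le (Eventually.of_forall fun s hs => ?_)
          (Continuous.intervalIntegrable (by fun_prop) _ _)
        rw [norm_mul, norm_mul, norm_I, mul_one, norm_real, Real.norm_eq_abs]
        exact mul_le_mul (norm_cexp_neg_sq_le hm hs.1.le hs.2) hm (abs_nonneg m) (exp_pos _).le
    _ ≤ 1 / (a ^ 2 * T) * a := by
        rw [integral_mul_const]
        gcongr
        exact integral_exp_mul_sub_le (by positivity) T
    _ = 1 / (a * T) := by field_simp

lemma tendsto_integral_cexp_neg_sq_real {a : ℝ} (ha : 0 < a) :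
    Tendsto (fun T : ℝ => ∫ s in (0 : ℝ)..T, cexp (-(a * s) ^ 2) * a) atTop
      (𝓝 (√π / 2 : ℝ)) := by
  have hgauss := (MeasureTheory.intervalIntegral_tendsto_integral_Ioi 0
    (integrable_exp_neg_mul_sq one_pos).integrableOn (tendsto_id.const_mul_atTop ha)).ofReal
  rw [integral_gaussian_Ioi, div_one] at hgauss
  refine hgauss.congr fun T => ?_
  have hscale := smul_integral_comp_mul_left (a := 0) (b := T) (fun s => rexp (-1 * s ^ 2)) a
  rw [mul_zero] at hscale
  rw [id, ← hscale, smul_eq_mul, mul_comm, ← integral_mul_const, ← intervalIntegral.integral_ofReal]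
  simp

lemma tendsto_integral_cexp_neg_sq_ray {c : ℂ} (hc : 0 < c.re) (hsector : |c.im| ≤ c.re) :
    Tendsto (fun T : ℝ => ∫ s in (0 : ℝ)..T, cexp (-(c * s) ^ 2)) atTop
      (𝓝 ((√π / 2 : ℝ) / c)) := by
  have hc0 : c ≠ 0 := fun h => hc.ne' (by simp [h])
  have hvert : Tendsto (fun T : ℝ => ∫ s in (0 : ℝ)..T,
      cexp (-(c.re * T + c.im * I * s) ^ 2) * (c.im * I)) atTop (𝓝 0) := by
    refine squeeze_zero_norm' (a := fun T => 1 / (c.re * T)) ?_ ?_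
    · filter_upwards [eventually_gt_atTop 0] with T hT
      exact norm_integral_cexp_neg_sq_vertical_le hc hsector hT
    · exact (tendsto_id.const_mul_atTop hc).const_div_atTop 1
  have hsum := ((tendsto_integral_cexp_neg_sq_real hc).add hvert).div_const c
  rw [add_zero] at hsum
  refine hsum.congr fun T => ?_
  rw [← integral_triangle_of_differentiable (f := fun z => cexp (-z ^ 2)) (by fun_prop), re_add_im,
    integral_mul_const, mul_div_cancel_right₀ _ hc0]

lemma tendsto_integral_cexp_neg_sq_line {c : ℂ} (hc : 0 < c.re) (hsector : |c.im| ≤ c.re) (w : ℝ)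
    {ι : Type*} {l : Filter ι} {x y : ι → ℝ} (hx : Tendsto x l atBot) (hy : Tendsto y l atTop) :
    Tendsto (fun i => ∫ s in x i..y i, cexp (-(c * (s + w)) ^ 2)) l (𝓝 (√π / c)) := by
  have heven : Function.Even fun s : ℝ => cexp (-(c * s) ^ 2) := fun s => by simp
  have h := tendsto_integral_atBot_atTop_of_even heven
    (fun _ _ => Continuous.intervalIntegrable (by fun_prop) _ _)
    (tendsto_integral_cexp_neg_sq_ray hc hsector)
    (tendsto_atBot_add_const_right l w hx) (tendsto_atTop_add_const_right l w hy)
  simp_rw [← integral_comp_add_right, ofReal_add] at h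
  rwa [nsmul_eq_mul, mul_div_assoc', Nat.cast_ofNat, ofReal_div, ofReal_ofNat,
    mul_div_cancel₀ _ two_ne_zero] at h

end GaussianRay

section Chirp

/-- The linear chirp `e^{i(κs² + ωs)}`, the oscillating factor of Fresnel integrals: `κ` is half the
chirp rate and `ω` the frequency at `s = 0`. -/
noncomputable def chirp (κ ω s : ℝ) : ℂ := cexp (I * (κ * s ^ 2 + ω * s))

lemma intervalIntegrable_chirp {κ ω a b : ℝ} :
    IntervalIntegrable (chirp κ ω) MeasureTheory.volume a b := by
  unfold chirp
  exact Continuous.intervalIntegrable (by fun_prop) _ _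

lemma conj_chirp (κ ω s : ℝ) : (starRingEnd ℂ) (chirp κ ω s) = chirp (-κ) (-ω) s := by
  simp only [chirp, ← exp_conj, map_mul, map_add, map_pow, conj_I, conj_ofReal]
  congr 1
  push_cast
  ring

/-- The square root of `-iκ` in the right half-plane, for `κ > 0`: the direction along which
`exp (-z ^ 2)` becomes the chirp `e^{iκs²}`. -/
noncomputable def fresnelRoot (κ : ℝ) : ℂ := √κ * cexp (-(π / 4 : ℝ) * I)

lemma fresnelRoot_re (κ : ℝ) : (fresnelRoot κ).re = √κ * (√2 / 2) := by
  rw [fresnelRoot, re_ofReal_mul, ← ofReal_neg, exp_ofReal_mul_I_re, Real.cos_neg, cos_pi_div_four]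

lemma fresnelRoot_im (κ : ℝ) : (fresnelRoot κ).im = -(√κ * (√2 / 2)) := by
  rw [fresnelRoot, im_ofReal_mul, ← ofReal_neg, exp_ofReal_mul_I_im, Real.sin_neg, sin_pi_div_four,
    mul_neg]

lemma sqrt_pi_div_fresnelRoot (κ : ℝ) :
    √π / fresnelRoot κ = √(π / κ) * cexp ((π / 4 : ℝ) * I) := by
  rw [fresnelRoot, ← div_div, ← ofReal_div, ← sqrt_div pi_pos.le, div_eq_mul_inv, ← Complex.exp_neg,
    neg_mul, neg_neg]

variable {κ : ℝ}

lemma fresnelRoot_sq (hκ : 0 ≤ κ) : fresnelRoot κ ^ 2 = -I * κ := by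
  have hphase : cexp (-(π / 4 : ℝ) * I) ^ 2 = -I := by
    rw [← Complex.exp_nat_mul, ← exp_neg_pi_div_two_mul_I]
    congr 1
    push_cast
    ring
  rw [fresnelRoot, mul_pow, hphase, ← ofReal_pow, sq_sqrt hκ, mul_comm]

lemma chirp_eq_cexp_mul_cexp_neg_sq (hκ : 0 < κ) (ω s : ℝ) :
    chirp κ ω s = cexp (-(ω ^ 2 / (4 * κ) : ℝ) * I) *
      cexp (-(fresnelRoot κ * (s + (ω / (2 * κ) : ℝ))) ^ 2) := by
  have hκ' : (κ : ℂ) ≠ 0 := ofReal_ne_zero.2 hκ.ne'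
  rw [chirp, ← Complex.exp_add, mul_pow, fresnelRoot_sq hκ.le]
  congr 1
  push_cast
  field_simp
  ring

variable {ι : Type*} {l : Filter ι} {x y : ι → ℝ}

lemma tendsto_integral_chirp (hκ : 0 < κ) (ω : ℝ) (hx : Tendsto x l atBot)
    (hy : Tendsto y l atTop) :
    Tendsto (fun i => ∫ s in x i..y i, chirp κ ω s) l
      (𝓝 (√(π / κ) * cexp ((π / 4 - ω ^ 2 / (4 * κ) : ℝ) * I))) := by
  have hre : 0 < (fresnelRoot κ).re := by
    rw [fresnelRoot_re]
    positivity
  have hsector : |(fresnelRoot κ).im| ≤ (fresnelRoot κ).re := by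
    rw [fresnelRoot_im, abs_neg, ← fresnelRoot_re, abs_of_pos hre]
  have h := (tendsto_integral_cexp_neg_sq_line hre hsector (ω / (2 * κ)) hx hy).const_mul
    (cexp (-(ω ^ 2 / (4 * κ) : ℝ) * I))
  simp_rw [← integral_const_mul, ← chirp_eq_cexp_mul_cexp_neg_sq hκ] at h
  rwa [sqrt_pi_div_fresnelRoot, mul_left_comm, ← Complex.exp_add, ← add_mul, neg_add_eq_sub,
    ← ofReal_sub] at h

lemma tendsto_integral_chirp_neg (hκ : 0 < κ) (ω : ℝ) (hx : Tendsto x l atBot)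
    (hy : Tendsto y l atTop) :
    Tendsto (fun i => ∫ s in x i..y i, chirp (-κ) ω s) l
      (𝓝 (√(π / κ) * cexp (-(π / 4 - ω ^ 2 / (4 * κ) : ℝ) * I))) := by
  have h := (continuous_conj.tendsto _).comp (tendsto_integral_chirp hκ (-ω) hx hy)
  simp only [Function.comp_def, ← intervalIntegral_conj, conj_chirp, neg_neg, neg_sq, map_mul,
    ← exp_conj, conj_ofReal, conj_I, mul_neg, ← neg_mul] at h
  exact h

end Chirp

section DoubleIntegral

lemma integral_integral_mul_add_mul {𝕜 : Type*} [RCLike 𝕜] {f₁ f₂ g₁ g₂ : ℝ → 𝕜}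
    {a b c d : ℝ} (hf₁ : IntervalIntegrable f₁ MeasureTheory.volume a b)
    (hf₂ : IntervalIntegrable f₂ MeasureTheory.volume a b)
    (hg₁ : IntervalIntegrable g₁ MeasureTheory.volume c d)
    (hg₂ : IntervalIntegrable g₂ MeasureTheory.volume c d) :
    ∫ s in a..b, ∫ t in c..d, (f₁ s * g₁ t + f₂ s * g₂ t) =
      (∫ s in a..b, f₁ s) * (∫ t in c..d, g₁ t) + (∫ s in a..b, f₂ s) * ∫ t in c..d, g₂ t := by
  have hinner (s : ℝ) : ∫ t in c..d, (f₁ s * g₁ t + f₂ s * g₂ t) =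
      f₁ s * (∫ t in c..d, g₁ t) + f₂ s * ∫ t in c..d, g₂ t := by
    rw [integral_add (hg₁.const_mul _) (hg₂.const_mul _), integral_const_mul, integral_const_mul]
  simp_rw [hinner]
  rw [integral_add (hf₁.mul_const _) (hf₂.mul_const _), integral_mul_const, integral_mul_const]

lemma cexp_mul_cexp_mul_cos_eq_chirp (κ₁ κ₂ ω η s t : ℝ) :
    cexp (I * ω * s) * cexp (-I * t * η) * (Real.cos (κ₁ * s ^ 2 - κ₂ * t ^ 2) : ℂ) =
      (chirp κ₁ ω s * chirp (-κ₂) (-η) t + chirp (-κ₁) ω s * chirp κ₂ (-η) t) / 2 := by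
  simp only [chirp, ofReal_cos, Complex.cos, ← mul_div_assoc, mul_add, ← Complex.exp_add]
  congr 3 <;> push_cast <;> ring

lemma integral_integral_cexp_mul_cexp_mul_cos (κ₁ κ₂ ω η a b c d : ℝ) :
    ∫ s in a..b, ∫ t in c..d,
        cexp (I * ω * s) * cexp (-I * t * η) * (Real.cos (κ₁ * s ^ 2 - κ₂ * t ^ 2) : ℂ) =
      ((∫ s in a..b, chirp κ₁ ω s) * (∫ t in c..d, chirp (-κ₂) (-η) t) +
        (∫ s in a..b, chirp (-κ₁) ω s) * ∫ t in c..d, chirp κ₂ (-η) t) / 2 := by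
  simp_rw [cexp_mul_cexp_mul_cos_eq_chirp, intervalIntegral.integral_div]
  rw [integral_integral_mul_add_mul intervalIntegrable_chirp intervalIntegrable_chirp
    intervalIntegrable_chirp intervalIntegrable_chirp]

lemma sqrt_mul_cexp_add_div_two_eq_cos {κ₁ : ℝ} (hκ₁ : 0 ≤ κ₁) (κ₂ α β : ℝ) :
    (√(π / κ₁) * cexp (α * I) * (√(π / κ₂) * cexp (-β * I)) +
      √(π / κ₁) * cexp (-α * I) * (√(π / κ₂) * cexp (β * I))) / 2 =
      (π / √(κ₁ * κ₂) * Real.cos (α - β) : ℝ) := by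
  have hamp : √(π / κ₁) * √(π / κ₂) = π / √(κ₁ * κ₂) := by
    rw [sqrt_div pi_pos.le, sqrt_div pi_pos.le, div_mul_div_comm, mul_self_sqrt pi_pos.le,
      sqrt_mul hκ₁]
  have hcos : (Real.cos (α - β) : ℂ) =
      (cexp (α * I) * cexp (-β * I) + cexp (-α * I) * cexp (β * I)) / 2 := by
    rw [ofReal_cos, Complex.cos, ← Complex.exp_add, ← Complex.exp_add]
    congr 3 <;> push_cast <;> ring
  rw [← hamp, ofReal_mul, hcos, ofReal_mul]
  ring

end DoubleIntegral

theorem double_fresnel_integral_general {κ₁ κ₂ : ℝ} (hκ₁ : 0 < κ₁) (hκ₂ : 0 < κ₂) (ω η : ℝ)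
    {ι : Type*} {l : Filter ι} {x₁ y₁ x₂ y₂ : ι → ℝ} (hx₁ : Tendsto x₁ l atBot)
    (hy₁ : Tendsto y₁ l atTop) (hx₂ : Tendsto x₂ l atBot) (hy₂ : Tendsto y₂ l atTop) :
    Tendsto (fun i => ∫ s in x₁ i..y₁ i, ∫ t in x₂ i..y₂ i,
        cexp (I * ω * s) * cexp (-I * t * η) * (Real.cos (κ₁ * s ^ 2 - κ₂ * t ^ 2) : ℂ))
      l (𝓝 (π / √(κ₁ * κ₂) * Real.cos (ω ^ 2 / (4 * κ₁) - η ^ 2 / (4 * κ₂)) : ℝ)) := by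
  have hpos_neg := (tendsto_integral_chirp hκ₁ ω hx₁ hy₁).mul
    (tendsto_integral_chirp_neg hκ₂ (-η) hx₂ hy₂)
  have hneg_pos := (tendsto_integral_chirp_neg hκ₁ ω hx₁ hy₁).mul
    (tendsto_integral_chirp hκ₂ (-η) hx₂ hy₂)
  have hsum := (hpos_neg.add hneg_pos).div_const 2
  rw [sqrt_mul_cexp_add_div_two_eq_cos hκ₁.le, neg_sq, sub_sub_sub_cancel_left, ← Real.cos_neg,
    neg_sub] at hsum
  simpa only [integral_integral_cexp_mul_cexp_mul_cos] using hsum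

/-- For all real `ω₁` and `ω₂`, the improper double integral
`∫_{-∞}^{∞} ds₁ ∫_{-∞}^{∞} ds₂ e^{iω₁s₁}·e^{−is₂(ω₁−ω₂)}·cos(s₁² − s₂²)`,
understood as the limit as `T → ∞` of the integral over the square
`[−T, T] × [−T, T]`, converges and equals `π·cos[(1/4)·ω₂·(2ω₁ − ω₂)]`
(a real number). -/
theorem double_fresnel_integral (ω₁ ω₂ : ℝ) :
    Tendsto (fun T : ℝ =>
        ∫ s₁ in (-T)..T, ∫ s₂ in (-T)..T,
          Complex.exp (Complex.I * ω₁ * s₁) *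
            Complex.exp (-Complex.I * s₂ * (ω₁ - ω₂)) *
            ((Real.cos (s₁ ^ 2 - s₂ ^ 2) : ℝ) : ℂ))
      atTop (𝓝 (((π * Real.cos (ω₂ * (2 * ω₁ - ω₂) / 4) : ℝ) : ℂ))) := by
  rw [show ω₂ * (2 * ω₁ - ω₂) / 4 = ω₁ ^ 2 / 4 - (ω₁ - ω₂) ^ 2 / 4 by ring]
  simpa using double_fresnel_integral_general one_pos one_pos ω₁ (ω₁ - ω₂) tendsto_neg_atTop_atBot
    tendsto_id tendsto_neg_atTop_atBot tendsto_id
end
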